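/- Let p be a prime and let ℤ/p act linearly on S^n via an orthogonal representation ρ : ℤ/p → O(n+1) with (S^n)^{ℤ/p} ≠ ∅, so that (S^n)^{ℤ/p} is a great k-sphere S^k for some 0 ≤ k ≤ n. Then TC_{ℤ/p}(S^n) = 2 if and only if both n and k are odd. -/

import Mathlib

open Set unitInterval

namespace PaperTC

variable {G X : Type*}

/-- The orbit of `x` under the action `act`. -/
def orbit (act : G → X → X) (x : X) : Set X := {y | ∃ g, act g x = y}

/-- The fixed point set of the action `act`. -/
def fixedSet (act : G → X → X) : Set X := {x | ∀ g, act g x = x}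

/-- The fixed point set of a subset `S` of the acting group. -/
def fixedSetOf (act : G → X → X) (S : Set G) : Set X := {x | ∀ g ∈ S, act g x = x}

/-- `minCover P` is the least `k ≥ 1` satisfying `P k`, as an element of `ℕ∞`
(equal to `∞` if there is no such `k`). -/
noncomputable def minCover (P : ℕ → Prop) : ℕ∞ :=
  sInf {k : ℕ∞ | ∃ m : ℕ, k = m ∧ 1 ≤ m ∧ P m}

section Plain

variable (Y : Type*) [TopologicalSpace Y]

/-- `Y × Y` can be covered by `k` open sets each admitting a motion planner. -/
def TCcover (k : ℕ) : Prop :=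
  ∃ U : Fin k → Set (Y × Y),
    (∀ i, IsOpen (U i)) ∧ (⋃ i, U i) = univ ∧
    ∀ i, ∃ s : Y × Y → C(I, Y),
      ContinuousOn s (U i) ∧ ∀ p ∈ U i, s p 0 = p.1 ∧ s p 1 = p.2

/-- Topological complexity (non-reduced, possibly infinite). -/
noncomputable def TC : ℕ∞ := minCover (TCcover Y)

/-- `Y` can be covered by `k` open sets, each of which can be deformed within `Y`
to a point. -/
def catCover (k : ℕ) : Prop :=
  ∃ U : Fin k → Set Y,
    (∀ i, IsOpen (U i)) ∧ (⋃ i, U i) = univ ∧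
    ∀ i, ∃ H : Y × I → Y,
      ContinuousOn H (U i ×ˢ (univ : Set I)) ∧ (∀ x ∈ U i, H (x, 0) = x) ∧
      ∃ y₀, ∀ x ∈ U i, H (x, 1) = y₀

/-- Non-reduced Lusternik–Schnirelmann category. -/
noncomputable def cat : ℕ∞ := minCover (catCover Y)

end Plain

section Equivariant

variable [TopologicalSpace X] (act : G → X → X)

/-- `X × X` can be covered by `k` invariant open sets each admitting an
equivariant motion planner. -/
def eqTCcover (k : ℕ) : Prop :=
  ∃ U : Fin k → Set (X × X),
    (∀ i, IsOpen (U i)) ∧ (⋃ i, U i) = univ ∧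
    ∀ i, (∀ g p, p ∈ U i → (act g p.1, act g p.2) ∈ U i) ∧
      ∃ s : X × X → C(I, X),
        ContinuousOn s (U i) ∧
        (∀ p ∈ U i, s p 0 = p.1 ∧ s p 1 = p.2) ∧
        (∀ g p, p ∈ U i → ∀ t : I, s (act g p.1, act g p.2) t = act g (s p t))

/-- Equivariant topological complexity `TC_G` of Colman and Grant. -/
noncomputable def eqTC : ℕ∞ := minCover (eqTCcover act)

/-- `X × X` can be covered by `k` `(G × G)`-invariant open sets, each admitting a
`(G × G)`-equivariant section of `π^G : P X ×_{X/G} P X → X × X`; such a section is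
recorded by a pair of paths `s₁ p`, `s₂ p`, with the orbit of the endpoint of the first
equal to the orbit of the starting point of the second. -/
def invTCcover (k : ℕ) : Prop :=
  ∃ U : Fin k → Set (X × X),
    (∀ i, IsOpen (U i)) ∧ (⋃ i, U i) = univ ∧
    ∀ i, (∀ g₁ g₂ : G, ∀ p, p ∈ U i → (act g₁ p.1, act g₂ p.2) ∈ U i) ∧
      ∃ s₁ s₂ : X × X → C(I, X),
        ContinuousOn s₁ (U i) ∧ ContinuousOn s₂ (U i) ∧
        (∀ p ∈ U i, s₁ p 0 = p.1 ∧ s₂ p 1 = p.2 ∧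
          orbit act (s₁ p 1) = orbit act (s₂ p 0)) ∧
        (∀ g₁ g₂ : G, ∀ p, p ∈ U i → ∀ t : I,
          s₁ (act g₁ p.1, act g₂ p.2) t = act g₁ (s₁ p t) ∧
          s₂ (act g₁ p.1, act g₂ p.2) t = act g₂ (s₂ p t))

/-- Invariant topological complexity `TC^G` of Lubawski and Marzantowicz. -/
noncomputable def invTC : ℕ∞ := minCover (invTCcover act)

/-- The invariant open set `U` is `G`-compressible into `A`: the inclusion `U ↪ X` is
`G`-equivariantly homotopic to a `G`-map with values in `A`. -/
def GCompressible (A : Set X) (U : Set X) : Prop :=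
  (∀ g x, x ∈ U → act g x ∈ U) ∧
  ∃ H : X × I → X,
    ContinuousOn H (U ×ˢ (univ : Set I)) ∧ (∀ x ∈ U, H (x, 0) = x) ∧
    (∀ g x, x ∈ U → ∀ t : I, H (act g x, t) = act g (H (x, t))) ∧
    (∀ x ∈ U, H (x, 1) ∈ A)

/-- A `G`-categorical set: compressible into a single orbit. -/
def GCategorical (U : Set X) : Prop :=
  ∃ x₀ : X, GCompressible act (orbit act x₀) U

/-- `X` can be covered by `k` open `G`-categorical sets. -/
def catGCover (k : ℕ) : Prop :=
  ∃ U : Fin k → Set X,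
    (∀ i, IsOpen (U i)) ∧ (⋃ i, U i) = univ ∧ ∀ i, GCategorical act (U i)

/-- Equivariant Lusternik–Schnirelmann category `cat_G`. -/
noncomputable def catG : ℕ∞ := minCover (catGCover act)

/-- `X` can be covered by `k` open sets `G`-compressible into `{star}`. -/
def pointedCatGCover (star : X) (k : ℕ) : Prop :=
  ∃ U : Fin k → Set X,
    (∀ i, IsOpen (U i)) ∧ (⋃ i, U i) = univ ∧
    ∀ i, GCompressible act {star} (U i)

/-- The pointed equivariant category `_{{⋆}}cat_G(X)`. -/
noncomputable def pointedCatG (star : X) : ℕ∞ := minCover (pointedCatGCover act star)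

/-- `X` is `G`-contractible: the identity is `G`-homotopic to a map with values in a
single orbit. -/
def GContractible : Prop :=
  ∃ H : X × I → X,
    Continuous H ∧ (∀ x, H (x, 0) = x) ∧
    (∀ g x, ∀ t : I, H (act g x, t) = act g (H (x, t))) ∧
    ∃ x₀ : X, ∀ x, H (x, 1) ∈ orbit act x₀

end Equivariant

/-- The orbit space `X/G` with the quotient topology. -/
abbrev OrbitSpace (act : G → X → X) : Type _ := Quot (fun x y => ∃ g, act g x = y)

end PaperTC
namespace PaperTC

/-- The unit sphere `S^n ⊆ ℝ^{n+1}` (with the Euclidean metric). -/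
abbrev Sph (n : ℕ) : Set (EuclideanSpace ℝ (Fin (n + 1))) := Metric.sphere 0 1

/-- The action of `G` on the unit sphere `S^n` obtained by restricting an orthogonal
representation of `G` on `ℝ^{n+1}`. -/
noncomputable def sphereAct {G : Type*} [Monoid G] {n : ℕ}
    (ρ : G →* (EuclideanSpace ℝ (Fin (n + 1)) ≃ₗᵢ[ℝ] EuclideanSpace ℝ (Fin (n + 1)))) :
    G → ↥(Sph n) → ↥(Sph n) := fun g x =>
  ⟨ρ g x, mem_sphere_zero_iff_norm.mpr (by
    rw [(ρ g).norm_map]; exact mem_sphere_zero_iff_norm.mp x.2)⟩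

end PaperTC


namespace PaperTC
section
open Set MeasureTheory Topology Filter
section LemN
variable {W : Type*} [NormedAddCommGroup W] [NormedSpace ℝ W] [FiniteDimensional ℝ W]
  [MeasurableSpace W] [BorelSpace W]

lemma interp_zero (N : ℕ) (v : ℕ → ℝ) (hv : Function.Injective v) :
    ∃ w : ℕ → ℝ, ∀ q : Polynomial ℝ, q.natDegree ≤ N →
      q.eval 0 = ∑ i ∈ Finset.range (N+1), w i * q.eval (v i) := by
  refine ⟨fun i => (Lagrange.basis (Finset.range (N+1)) v i).eval 0, fun q hq => ?_⟩
  have h := Lagrange.eq_interpolate (s := Finset.range (N+1)) (v := v) (f := q) hv.injOn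
    (by
      rw [Finset.card_range]
      exact lt_of_le_of_lt Polynomial.degree_le_natDegree (by exact_mod_cast Nat.lt_succ_of_le hq))
  conv_lhs => rw [h]
  rw [Lagrange.interpolate_apply, Polynomial.eval_finsetSum]
  refine Finset.sum_congr rfl fun i _ => ?_
  rw [Polynomial.eval_mul, Polynomial.eval_C, mul_comm]

lemma rogers (μ : Measure W) [μ.IsAddHaarMeasure] {h : W → W} (hh : ContDiff ℝ 1 h)
    {R : ℝ} (hR : ∀ x ∉ Metric.closedBall (0:W) R, h x = 0) {K : NNReal} (hK : LipschitzWith K h)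
    {δ : ℝ} (hδ : ∀ A : W →L[ℝ] W, dist A (ContinuousLinearMap.id ℝ W) < δ → 0 < A.det)
    {s : ℝ} (hs : 0 < s) (h1 : K < s) (h2 : K < δ * s) :
    ∫ x in Metric.closedBall (0:W) R, (s • ContinuousLinearMap.id ℝ W + fderiv ℝ h x).det ∂μ
      = s ^ (Module.finrank ℝ W) * μ.real (Metric.closedBall (0:W) R) := by
  set B := Metric.closedBall (0:W) R
  set Φ : W → W := fun x => x + s⁻¹ • h x with hΦ
  have hd : ∀ x, HasFDerivAt Φ (ContinuousLinearMap.id ℝ W + s⁻¹ • fderiv ℝ h x) x := fun x =>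
    (hasFDerivAt_id x).add (((hh.differentiable (by simp)) x).hasFDerivAt.const_smul s⁻¹)
  have hpos : ∀ x, 0 < (ContinuousLinearMap.id ℝ W + s⁻¹ • fderiv ℝ h x).det := by
    intro x
    apply hδ
    rw [dist_eq_norm, add_sub_cancel_left, norm_smul, Real.norm_of_nonneg (by positivity)]
    have := norm_fderiv_le_of_lipschitz ℝ hK (x₀ := x)
    rw [inv_mul_lt_iff₀ hs]
    linarith
  set c : NNReal := K / Real.toNNReal s with hc
  have hc1 : c < 1 := by
    rw [hc, div_lt_one (by simpa using hs), ← NNReal.coe_lt_coe, Real.coe_toNNReal s hs.le]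
    exact h1
  have happ : ApproximatesLinearOn Φ ((ContinuousLinearEquiv.refl ℝ W : W ≃L[ℝ] W) : W →L[ℝ] W) univ c := by
    intro x _ y _
    have e : Φ x - Φ y - ((ContinuousLinearEquiv.refl ℝ W : W ≃L[ℝ] W) : W →L[ℝ] W) (x - y) = s⁻¹ • (h x - h y) := by
      simp [hΦ, smul_sub]; abel
    rw [e, norm_smul, Real.norm_of_nonneg (by positivity)]
    have := hK.norm_sub_le x y
    have hcs : (c:ℝ) = K / s := by rw [hc, NNReal.coe_div, Real.coe_toNNReal s hs.le]
    rw [hcs, div_eq_inv_mul, mul_assoc]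
    gcongr
  have hcc : Subsingleton W ∨ c < ‖((ContinuousLinearEquiv.refl ℝ W : W ≃L[ℝ] W).symm : W →L[ℝ] W)‖₊⁻¹ := by
    rcases subsingleton_or_nontrivial W with hW | hW
    · exact Or.inl hW
    · right
      have : ‖((ContinuousLinearEquiv.refl ℝ W : W ≃L[ℝ] W).symm : W →L[ℝ] W)‖₊ = 1 := by
        ext; simp
      rw [this]; simpa using hc1
  have hinj : Function.Injective Φ := injOn_univ.1 (happ.injOn hcc)
  have hsurj := happ.surjective hcc
  have himg : Φ '' B = B := by
    apply Subset.antisymm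
    · rintro _ ⟨x, hx, rfl⟩
      by_contra hcon
      have e : Φ (Φ x) = Φ x := by
        have := hR _ hcon
        change Φ x + s⁻¹ • h (Φ x) = Φ x
        rw [this]; simp
      have := hinj e
      rw [this] at hcon
      exact hcon hx
    · intro y hy
      obtain ⟨x, rfl⟩ := hsurj y
      by_cases hx : x ∈ B
      · exact ⟨x, hx, rfl⟩
      · exfalso
        have : Φ x = x := by simp [hΦ, hR x hx]
        rw [this] at hy
        exact hx hy
  have hB : MeasurableSet B := Metric.isClosed_closedBall.measurableSet
  have key := integral_image_eq_integral_abs_det_fderiv_smul μ hB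
    (fun x _ => (hd x).hasFDerivWithinAt) hinj.injOn (fun _ => (1:ℝ))
  rw [himg] at key
  simp only [smul_eq_mul, mul_one, integral_const, MeasurableSet.univ, measureReal_restrict_apply, univ_inter] at key
  rw [key, ← integral_const_mul]
  congr 1
  ext x
  rw [abs_of_pos (hpos x)]
  have e : s • ContinuousLinearMap.id ℝ W + fderiv ℝ h x
      = s • (ContinuousLinearMap.id ℝ W + s⁻¹ • fderiv ℝ h x) := by
    rw [smul_add, smul_inv_smul₀ hs.ne']
  rw [e]
  simp only [ContinuousLinearMap.det]
  exact LinearMap.det_smul s ((ContinuousLinearMap.id ℝ W + s⁻¹ • fderiv ℝ h x : W →L[ℝ] W) : W →ₗ[ℝ] W)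

lemma integral_det_fderiv_eq_zero [Nontrivial W] (μ : Measure W) [μ.IsAddHaarMeasure] {h : W → W}
    (hh : ContDiff ℝ 1 h) (hc : HasCompactSupport h) :
    ∫ x, (fderiv ℝ h x).det ∂μ = 0 := by
  obtain ⟨K, hK⟩ := ContDiff.lipschitzWith_of_hasCompactSupport hc hh (by simp)
  obtain ⟨R, hR⟩ := hc.isCompact.isBounded.subset_closedBall (0:W)
  have hR' : ∀ x ∉ Metric.closedBall (0:W) R, h x = 0 := fun x hx =>
    image_eq_zero_of_notMem_tsupport fun h' => hx (hR h')
  obtain ⟨δ, hδ0, hδ⟩ : ∃ δ > 0, ∀ A : W →L[ℝ] W,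
      dist A (ContinuousLinearMap.id ℝ W) < δ → 0 < A.det := by
    have h1 : (ContinuousLinearMap.id ℝ W).det = 1 := by simp [ContinuousLinearMap.det]
    have : ∀ᶠ A : W →L[ℝ] W in 𝓝 (ContinuousLinearMap.id ℝ W), 0 < A.det :=
      (ContinuousLinearMap.continuous_det.tendsto _).eventually (by
        rw [h1]; exact lt_mem_nhds one_pos)
    obtain ⟨δ, h0, h⟩ := Metric.eventually_nhds_iff.1 this
    exact ⟨δ, h0, fun A hA => h hA⟩
  set N := Module.finrank ℝ W with hN
  have hN0 : N ≠ 0 := Module.finrank_pos.ne'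
  set S : ℝ := K + K / δ + 1 with hS
  have hK0 : (0:ℝ) ≤ K := K.2
  have hKd : 0 ≤ (K:ℝ) / δ := by positivity
  set v : ℕ → ℝ := fun i => S + i
  have hv : Function.Injective v := fun i j hij => by simpa [v] using hij
  obtain ⟨w, hw⟩ := interp_zero N v hv
  have hJ : ∀ i, ∫ x in Metric.closedBall (0:W) R,
      (v i • ContinuousLinearMap.id ℝ W + fderiv ℝ h x).det ∂μ
      = v i ^ N * μ.real (Metric.closedBall (0:W) R) := by
    intro i
    have hi : (0:ℝ) ≤ i := Nat.cast_nonneg i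
    refine rogers μ hh hR' hK hδ (by simp only [v]; linarith) (by simp only [v]; linarith) ?_
    have : (K:ℝ) = δ * (K/δ) := by field_simp
    rw [this]
    apply mul_lt_mul_of_pos_left _ hδ0
    simp only [v]; linarith
  have hpt : ∀ x, (fderiv ℝ h x).det = ∑ i ∈ Finset.range (N+1),
      w i * (v i • ContinuousLinearMap.id ℝ W + fderiv ℝ h x).det := by
    intro x
    have hq := hw (LinearMap.charpoly (-(fderiv ℝ h x : W →ₗ[ℝ] W)))
      (by rw [LinearMap.charpoly_natDegree])
    simp only [LinearMap.eval_charpoly] at hq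
    simp only [ContinuousLinearMap.det]
    convert hq using 2
    · simp
    · congr 1
      congr 1
      ext y
      simp
  have hcont : Continuous (fderiv ℝ h) := hh.continuous_fderiv (by simp)
  have hball : ∫ x, (fderiv ℝ h x).det ∂μ
      = ∫ x in Metric.closedBall (0:W) R, (fderiv ℝ h x).det ∂μ := by
    symm
    apply setIntegral_eq_integral_of_forall_compl_eq_zero
    intro x hx
    have : fderiv ℝ h x = 0 := by
      have : x ∉ tsupport (fderiv ℝ h) := fun h' => hx (hR (tsupport_fderiv_subset ℝ h'))
      exact image_eq_zero_of_notMem_tsupport this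
    rw [this]
    simp only [ContinuousLinearMap.det]
    simp [hN.symm, hN0]
  rw [hball]
  simp_rw [hpt]
  rw [integral_finsetSum]
  · simp_rw [integral_const_mul, hJ, ← mul_assoc]
    rw [← Finset.sum_mul]
    have := hw (Polynomial.X ^ N) (by simp)
    simp only [Polynomial.eval_pow, Polynomial.eval_X] at this
    rw [← this, zero_pow hN0, zero_mul]
  · intro i _
    apply Integrable.const_mul
    refine ContinuousOn.integrableOn_compact (isCompact_closedBall _ _) (Continuous.continuousOn ?_)
    exact ContinuousLinearMap.continuous_det.comp (continuous_const.add hcont)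
end LemN
end
end PaperTC


namespace PaperTC
section
open Set MeasureTheory Topology Filter
section LemH
variable {W : Type*} [NormedAddCommGroup W] [NormedSpace ℝ W] [FiniteDimensional ℝ W]

lemma det_prod_formula (c : ℝ) (l : W →ₗ[ℝ] ℝ) (L : ℝ × W →ₗ[ℝ] W) :
    LinearMap.det ((c • LinearMap.fst ℝ ℝ W + l ∘ₗ L).prod L)
      = c * LinearMap.det (L ∘ₗ LinearMap.inr ℝ ℝ W) := by
  have e : (c • LinearMap.fst ℝ ℝ W + l ∘ₗ L).prod L =
      LinearMap.transvection (l ∘ₗ LinearMap.snd ℝ ℝ W) ((1:ℝ), (0:W)) ∘ₗ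
      (LinearMap.prodMap (c • LinearMap.id) LinearMap.id) ∘ₗ
      LinearMap.transvection (LinearMap.fst ℝ ℝ W) ((0:ℝ), L (1, 0)) ∘ₗ
      (LinearMap.prodMap LinearMap.id (L ∘ₗ LinearMap.inr ℝ ℝ W)) := by
    ext <;> simp [LinearMap.transvection, show ((0:ℝ),(0:W)) = 0 from rfl]
  rw [e]
  simp only [LinearMap.det_comp, LinearMap.transvection.det, LinearMap.det_prodMap]
  simp

lemma exists_cutoff {K O : Set W} (hK : IsCompact K) (hO : IsOpen O) (hKO : K ⊆ O) :
    ∃ χ : W → ℝ, ContDiff ℝ 1 χ ∧ HasCompactSupport χ ∧ tsupport χ ⊆ O ∧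
      ∀ x ∈ K, ∀ᶠ y in 𝓝 x, χ y = 1 := by
  obtain ⟨V, hV, hKV, hVO, hVc⟩ := exists_open_between_and_isCompact_closure hK hO hKO
  obtain ⟨f, hf0, hf1, -⟩ := exists_contMDiffMap_zero_one_nhds_of_isClosed
    (modelWithCornersSelf ℝ W) (n := 1) (s := Vᶜ) (t := K) hV.isClosed_compl hK.isClosed
    (disjoint_compl_left_iff_subset.2 hKV)
  have hsupp : Function.support f ⊆ V := by
    intro x hx
    by_contra hxV
    exact hx (hf0.self_of_nhdsSet x hxV)
  have hts : tsupport f ⊆ closure V := closure_mono hsupp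
  refine ⟨f, f.contMDiff.contDiff, hVc.of_isClosed_subset (isClosed_tsupport _) hts, hts.trans hVO, ?_⟩
  intro x hx
  exact eventually_nhdsSet_iff_forall.1 hf1 x hx

/-- step function from 0 (t ≤ a) to 1 (t ≥ a+1) -/
lemma integral_deriv_step (a : ℝ) :
    ∫ t, deriv (fun t => Real.smoothTransition (t - a)) t = 1 := by
  have hcd : ContDiff ℝ 1 (fun t => Real.smoothTransition (t - a)) :=
    (Real.smoothTransition.contDiff (n := 1)).comp (contDiff_id.sub contDiff_const)
  have hc : HasCompactSupport (deriv (fun t => Real.smoothTransition (t - a))) := by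
    apply HasCompactSupport.intro (isCompact_Icc (a := a) (b := a+1))
    intro t ht
    rcases lt_or_ge t a with h | h
    · have : (fun t => Real.smoothTransition (t - a)) =ᶠ[𝓝 t] fun _ => 0 := by
        filter_upwards [gt_mem_nhds h] with s hs
        exact Real.smoothTransition.zero_of_nonpos (by linarith)
      rw [this.deriv_eq]; simp
    · have h' : a + 1 < t := by
        by_contra hh
        exact ht ⟨h, not_lt.1 hh⟩
      have : (fun t => Real.smoothTransition (t - a)) =ᶠ[𝓝 t] fun _ => 1 := by
        filter_upwards [lt_mem_nhds h'] with s hs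
        exact Real.smoothTransition.one_of_one_le (by linarith)
      rw [this.deriv_eq]; simp
  rw [integral_of_hasDerivAt_of_tendsto (f := fun t => Real.smoothTransition (t - a)) (m := 0) (n := 1)]
  · simp
  · exact fun x => ((hcd.differentiable (by simp)) x).hasDerivAt
  · exact (hcd.continuous_deriv (by simp)).integrable_of_hasCompactSupport hc
  · apply tendsto_const_nhds.congr'
    filter_upwards [eventually_le_atBot a] with t ht
    exact (Real.smoothTransition.zero_of_nonpos (by linarith)).symm
  · apply tendsto_const_nhds.congr'
    filter_upwards [eventually_ge_atTop (a+1)] with t ht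
    exact (Real.smoothTransition.one_of_one_le (by linarith)).symm

variable [MeasurableSpace W] [BorelSpace W]

lemma homotopy_inv (μ : Measure W) [μ.IsAddHaarMeasure] {Ω : Set W} (hΩ : IsOpen Ω)
    {Φ : ℝ × W → W} (hΦ : ContDiffOn ℝ 1 Φ (univ ×ˢ Ω)) {ψ Ψ : W → ℝ} (hψ : ContDiff ℝ 1 ψ)
    (hψc : HasCompactSupport ψ) (hψΩ : tsupport ψ ⊆ Ω) (hΨ : Differentiable ℝ Ψ)
    (hfac : ∀ t, ∀ w ∈ Ω, ψ w = Ψ (Φ (t, w)))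
    (h0 : ∀ t ≤ 0, ∀ w ∈ Ω, Φ (t, w) = Φ (0, w))
    (h1 : ∀ t ≥ 1, ∀ w ∈ Ω, Φ (t, w) = Φ (1, w)) :
    ∫ w, ψ w * (fderiv ℝ (fun w => Φ (0, w)) w).det ∂μ
      = ∫ w, ψ w * (fderiv ℝ (fun w => Φ (1, w)) w).det ∂μ := by
  set a : ℝ → ℝ := fun t => Real.smoothTransition (t - (-1)) with ha
  set b : ℝ → ℝ := fun t => Real.smoothTransition (t - 1) with hb
  have had : ContDiff ℝ 1 a :=
    (Real.smoothTransition.contDiff (n := 1)).comp (contDiff_id.sub contDiff_const)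
  have hbd : ContDiff ℝ 1 b :=
    (Real.smoothTransition.contDiff (n := 1)).comp (contDiff_id.sub contDiff_const)
  set lam : ℝ → ℝ := fun t => a t - b t with hlam
  have hlamd : ContDiff ℝ 1 lam := had.sub hbd
  have hlamc : HasCompactSupport lam := by
    apply HasCompactSupport.intro (isCompact_Icc (a := -1) (b := 2))
    intro t ht
    rcases lt_or_ge t (-1) with h | h
    · simp only [hlam, ha, hb]
      rw [Real.smoothTransition.zero_of_nonpos (by linarith), Real.smoothTransition.zero_of_nonpos (by linarith), sub_zero]
    · have h' : 2 < t := by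
        by_contra hh
        exact ht ⟨h, not_lt.1 hh⟩
      simp only [hlam, ha, hb]
      rw [Real.smoothTransition.one_of_one_le (by linarith), Real.smoothTransition.one_of_one_le (by linarith), sub_self]
  -- the compactly supported scalar function
  set η : ℝ × W → ℝ := fun z => lam z.1 * ψ z.2 with hη
  have hηd : ContDiff ℝ 1 η := (hlamd.comp contDiff_fst).mul (hψ.comp contDiff_snd)
  have hηs : tsupport η ⊆ tsupport lam ×ˢ tsupport ψ := by
    apply closure_minimal _ ((isClosed_tsupport _).prod (isClosed_tsupport _))
    intro z hz
    have hz' : lam z.1 * ψ z.2 ≠ 0 := hz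
    exact ⟨subset_closure (left_ne_zero_of_mul hz'), subset_closure (right_ne_zero_of_mul hz')⟩
  have hηc : IsCompact (tsupport η) :=
    (hlamc.isCompact.prod hψc.isCompact).of_isClosed_subset (isClosed_tsupport _) hηs
  have hO : IsOpen ((univ : Set ℝ) ×ˢ Ω) := isOpen_univ.prod hΩ
  have hηO : tsupport η ⊆ univ ×ˢ Ω := fun z hz => ⟨mem_univ _, hψΩ (hηs hz).2⟩
  obtain ⟨χ, hχ, hχc, hχO, hχ1⟩ := exists_cutoff hηc hO hηO
  set h : ℝ × W → ℝ × W := fun z => (η z, χ z • Φ z) with hh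
  have hχΦ : ContDiff ℝ 1 (fun z => χ z • Φ z) := by
    rw [contDiff_iff_contDiffAt]
    intro z
    by_cases hz : z ∈ tsupport χ
    · exact hχ.contDiffAt.smul (hΦ.contDiffAt (hO.mem_nhds (hχO hz)))
    · have : (fun z => χ z • Φ z) =ᶠ[𝓝 z] fun _ => 0 := by
        have := notMem_tsupport_iff_eventuallyEq.1 hz
        filter_upwards [this] with y hy
        simp [hy]
      exact contDiffAt_const.congr_of_eventuallyEq this
  have hhd : ContDiff ℝ 1 h := hηd.prodMk hχΦ
  have hhc : HasCompactSupport h := by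
    apply HasCompactSupport.intro (hηc.union hχc.isCompact)
    intro z hz
    rw [mem_union, not_or] at hz
    simp [hh, image_eq_zero_of_notMem_tsupport hz.1, image_eq_zero_of_notMem_tsupport hz.2]
  have hz0 := integral_det_fderiv_eq_zero (volume.prod μ) hhd hhc
  have hηf : ∀ z : ℝ × W, HasFDerivAt η ((deriv lam z.1 * ψ z.2) • ContinuousLinearMap.fst ℝ ℝ W +
      lam z.1 • (fderiv ℝ ψ z.2).comp (ContinuousLinearMap.snd ℝ ℝ W)) z := by
    intro z
    have e1 : HasFDerivAt (fun z : ℝ × W => lam z.1) (deriv lam z.1 • ContinuousLinearMap.fst ℝ ℝ W) z :=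
      (((hlamd.differentiable (by simp)) z.1).hasDerivAt).comp_hasFDerivAt z hasFDerivAt_fst
    have e2 : HasFDerivAt (fun z : ℝ × W => ψ z.2) ((fderiv ℝ ψ z.2).comp (ContinuousLinearMap.snd ℝ ℝ W)) z :=
      (((hψ.differentiable (by simp)) z.2).hasFDerivAt).comp z hasFDerivAt_snd
    refine (e1.mul e2).congr_fderiv ?_
    ext <;> simp [mul_comm]
  have hdet : ∀ z : ℝ × W, (fderiv ℝ h z).det
      = deriv lam z.1 * (ψ z.2 * (fderiv ℝ (fun w => Φ (z.1, w)) z.2).det) := by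
    intro z
    by_cases hz : z ∈ tsupport η
    · have hzΩ : z.2 ∈ Ω := (hηO hz).2
      have hΦz : HasFDerivAt Φ (fderiv ℝ Φ z) z :=
        ((hΦ.contDiffAt (hO.mem_nhds (hηO hz))).differentiableAt (by simp)).hasFDerivAt
      set L := fderiv ℝ Φ z
      have hheq : h =ᶠ[𝓝 z] fun y => (η y, Φ y) := by
        filter_upwards [hχ1 z hz] with y hy
        simp [hh, hy]
      have hψΨ : (fderiv ℝ ψ z.2).comp (ContinuousLinearMap.snd ℝ ℝ W) = (fderiv ℝ Ψ (Φ z)).comp L := by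
        have e2 : HasFDerivAt (fun z : ℝ × W => ψ z.2) ((fderiv ℝ ψ z.2).comp (ContinuousLinearMap.snd ℝ ℝ W)) z :=
          (((hψ.differentiable (by simp)) z.2).hasFDerivAt).comp z hasFDerivAt_snd
        have e3 : HasFDerivAt (fun z : ℝ × W => Ψ (Φ z)) ((fderiv ℝ Ψ (Φ z)).comp L) z :=
          ((hΨ (Φ z)).hasFDerivAt).comp z hΦz
        have e4 : (fun z : ℝ × W => ψ z.2) =ᶠ[𝓝 z] fun z => Ψ (Φ z) := by
          filter_upwards [hO.mem_nhds (hηO hz)] with y hy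
          exact hfac y.1 y.2 hy.2
        exact e2.unique (e3.congr_of_eventuallyEq e4)
      have hhf : HasFDerivAt h (((deriv lam z.1 * ψ z.2) • ContinuousLinearMap.fst ℝ ℝ W +
          lam z.1 • (fderiv ℝ Ψ (Φ z)).comp L).prod L) z := by
        have := (hηf z).prodMk hΦz
        rw [hψΨ] at this
        exact this.congr_of_eventuallyEq hheq
      have hΦw : HasFDerivAt (fun w => Φ (z.1, w)) (L.comp (ContinuousLinearMap.inr ℝ ℝ W)) z.2 := by
        have e5 : HasFDerivAt (fun w : W => (z.1, w)) (ContinuousLinearMap.inr ℝ ℝ W) z.2 :=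
          hasFDerivAt_prodMk_right z.1 z.2
        exact HasFDerivAt.comp z.2 (by exact hΦz) e5
      rw [hhf.fderiv, hΦw.fderiv]
      have := det_prod_formula (deriv lam z.1 * ψ z.2)
        (lam z.1 • ((fderiv ℝ Ψ (Φ z) : W →L[ℝ] ℝ) : W →ₗ[ℝ] ℝ)) (L : ℝ × W →ₗ[ℝ] W)
      rw [← mul_assoc]
      simp only [ContinuousLinearMap.det]
      refine Eq.trans (congrArg LinearMap.det ?_) (this.trans (congrArg (_ * LinearMap.det ·) ?_))
      · ext <;> simp
      · ext; simp
    · have hη0 : η =ᶠ[𝓝 z] fun _ => 0 := notMem_tsupport_iff_eventuallyEq.1 hz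
      have e1 := (hηf z).unique ((hasFDerivAt_const (0:ℝ) z).congr_of_eventuallyEq hη0)
      have e2 : deriv lam z.1 * ψ z.2 = 0 := by
        have := congrArg (fun A : ℝ × W →L[ℝ] ℝ => A (1, 0)) e1
        simpa using this
      rw [← mul_assoc, e2, zero_mul]
      by_contra hne
      have hhf := ((hhd.differentiable (by simp)) z).hasFDerivAt
      have hfst : (ContinuousLinearMap.fst ℝ ℝ W).comp (fderiv ℝ h z) = 0 := by
        have e3 : HasFDerivAt η ((ContinuousLinearMap.fst ℝ ℝ W).comp (fderiv ℝ h z)) z := hhf.fst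
        exact e3.unique ((hasFDerivAt_const (0:ℝ) z).congr_of_eventuallyEq hη0)
      have hu : IsUnit (LinearMap.det (fderiv ℝ h z : ℝ × W →ₗ[ℝ] ℝ × W)) := isUnit_iff_ne_zero.2 hne
      have hsurj := (LinearMap.equivOfIsUnitDet hu).surjective
      obtain ⟨y, hy⟩ := hsurj (1, 0)
      have e4 : fderiv ℝ h z y = (1, 0) := by simpa using hy
      have := congrArg (fun A : ℝ × W →L[ℝ] ℝ => A y) hfst
      simp [e4] at this
  have hint : Integrable (fun z : ℝ × W => deriv lam z.1 * (ψ z.2 * (fderiv ℝ (fun w => Φ (z.1, w)) z.2).det)) (volume.prod μ) := by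
    have e : (fun z : ℝ × W => deriv lam z.1 * (ψ z.2 * (fderiv ℝ (fun w => Φ (z.1, w)) z.2).det))
        = fun z => (fderiv ℝ h z).det := by
      ext z; rw [hdet]
    rw [e]
    apply Continuous.integrable_of_hasCompactSupport
    · exact ContinuousLinearMap.continuous_det.comp (hhd.continuous_fderiv (by simp))
    · apply (hhc.fderiv (𝕜 := ℝ)).comp_left (g := fun A : ℝ × W →L[ℝ] ℝ × W => A.det)
      simp [ContinuousLinearMap.det]
  simp_rw [hdet] at hz0
  rw [integral_prod _ hint] at hz0
  simp_rw [integral_const_mul] at hz0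
  set J : ℝ → ℝ := fun t => ∫ w, ψ w * (fderiv ℝ (fun w => Φ (t, w)) w).det ∂μ with hJ
  have hJeq : ∀ s t, (∀ w ∈ Ω, Φ (s, w) = Φ (t, w)) → J s = J t := by
    intro s t hst
    simp only [hJ]
    congr 1
    ext w
    by_cases hw : w ∈ Ω
    · have : (fun w => Φ (s, w)) =ᶠ[𝓝 w] fun w => Φ (t, w) := by
        filter_upwards [hΩ.mem_nhds hw] with y hy
        exact hst y hy
      rw [this.fderiv_eq]
    · have : ψ w = 0 := image_eq_zero_of_notMem_tsupport fun h' => hw (hψΩ h')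
      simp [this]
  have hfin : ∀ t, deriv lam t * J t = deriv a t * J 0 - deriv b t * J 1 := by
    intro t
    have e : deriv lam t = deriv a t - deriv b t :=
      deriv_sub ((had.differentiable (by simp)) t) ((hbd.differentiable (by simp)) t)
    have ea : deriv a t * J t = deriv a t * J 0 := by
      rcases le_or_gt t 0 with ht | ht
      · rw [hJeq t 0 (h0 t ht)]
      · have : a =ᶠ[𝓝 t] fun _ => 1 := by
          filter_upwards [lt_mem_nhds ht] with s hs
          exact Real.smoothTransition.one_of_one_le (by linarith)
        rw [this.deriv_eq]; simp
    have eb : deriv b t * J t = deriv b t * J 1 := by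
      rcases le_or_gt 1 t with ht | ht
      · rw [hJeq t 1 (h1 t ht)]
      · have : b =ᶠ[𝓝 t] fun _ => 0 := by
          filter_upwards [gt_mem_nhds ht] with s hs
          exact Real.smoothTransition.zero_of_nonpos (by linarith)
        rw [this.deriv_eq]; simp
    rw [e, sub_mul, ea, eb]
  have hz1 : ∫ t, (deriv a t * J 0 - deriv b t * J 1) = 0 := by
    refine Eq.trans ?_ hz0; congr 1; ext t; rw [← hfin]
  have ia := integral_deriv_step (-1)
  have ib := integral_deriv_step 1
  have iia : Integrable (deriv a) := by
    by_contra hcon; rw [integral_undef hcon] at ia; exact zero_ne_one ia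
  have iib : Integrable (deriv b) := by
    by_contra hcon; rw [integral_undef hcon] at ib; exact zero_ne_one ib
  rw [integral_sub (iia.mul_const _) (iib.mul_const _), integral_mul_const, integral_mul_const, ia, ib] at hz1
  simp only [one_mul] at hz1
  exact sub_eq_zero.1 hz1
end LemH
end
end PaperTC


namespace PaperTC
section
open Set MeasureTheory Topology Filter
section Deg
variable {E : Type*} [NormedAddCommGroup E] [InnerProductSpace ℝ E]

def Om (E : Type*) [NormedAddCommGroup E] : Set (E × E) := {w | w.1 ≠ 0 ∧ w.2 ≠ 0}

noncomputable def thb : ContDiffBump (2:ℝ) := ⟨1/2, 1, by norm_num, by norm_num⟩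

noncomputable def Psi (w : E × E) : ℝ := thb (‖w.1‖^2) * thb (‖w.2‖^2)

def Sm (f : E × E → E) : Prop := ContDiffOn ℝ 1 f (Om E) ∧ ∀ w ∈ Om E, ‖f w‖ = 1

noncomputable def comb (f g : E × E → E) (w : E × E) : E × E := (‖w.1‖ • f w, ‖w.2‖ • g w)

noncomputable def qa (w : E × E) : E := ‖w.1‖⁻¹ • w.1
noncomputable def qb (w : E × E) : E := ‖w.2‖⁻¹ • w.2

lemma isOpen_Om : IsOpen (Om E) :=
  (isOpen_ne_fun continuous_fst continuous_const).inter
    (isOpen_ne_fun continuous_snd continuous_const)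

lemma Psi_contDiff : ContDiff ℝ 1 (Psi (E := E)) := by
  unfold Psi
  exact (thb.contDiff.comp (contDiff_fst.norm_sq ℝ)).mul
    (thb.contDiff.comp (contDiff_snd.norm_sq ℝ))

lemma thb_nonneg (s : ℝ) : 0 ≤ thb s := thb.nonneg
lemma thb_zero {s : ℝ} (h : thb s ≠ 0) : 1 ≤ s ∧ s ≤ 3 := by
  have : s ∈ Function.support thb := h
  rw [thb.support_eq, Real.ball_eq_Ioo] at this
  have h1 := this.1
  have h2 := this.2
  simp only [thb] at h1 h2
  constructor <;> linarith

lemma tsupport_Psi : tsupport (Psi (E := E)) ⊆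
    {w | (1 ≤ ‖w.1‖^2 ∧ ‖w.1‖^2 ≤ 3) ∧ (1 ≤ ‖w.2‖^2 ∧ ‖w.2‖^2 ≤ 3)} := by
  apply closure_minimal
  · intro w hw
    have := mul_ne_zero_iff.1 hw
    exact ⟨thb_zero this.1, thb_zero this.2⟩
  · simp only [setOf_and]
    have c1 : Continuous fun w : E × E => ‖w.1‖^2 := by fun_prop
    have c2 : Continuous fun w : E × E => ‖w.2‖^2 := by fun_prop
    exact ((isClosed_le continuous_const c1).inter (isClosed_le c1 continuous_const)).inter
      ((isClosed_le continuous_const c2).inter (isClosed_le c2 continuous_const))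

lemma tsupport_Psi_Om : tsupport (Psi (E := E)) ⊆ Om E := by
  intro w hw
  have := tsupport_Psi hw
  constructor
  · intro h; have := this.1.1; rw [h] at this; norm_num at this
  · intro h; have := this.2.1; rw [h] at this; norm_num at this

lemma Psi_compact [FiniteDimensional ℝ E] : HasCompactSupport (Psi (E := E)) := by
  apply IsCompact.of_isClosed_subset (isCompact_closedBall (0 : E × E) 2) (isClosed_tsupport _)
  intro w hw
  have := tsupport_Psi hw
  rw [mem_closedBall_zero_iff, Prod.norm_def]
  apply max_le
  · nlinarith [this.1.2, norm_nonneg w.1]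
  · nlinarith [this.2.2, norm_nonneg w.2]

lemma Psi_nonneg (w : E × E) : 0 ≤ Psi w := mul_nonneg (thb_nonneg _) (thb_nonneg _)

lemma Psi_comb {f g : E × E → E} (w : E × E) (hf : ‖f w‖ = 1) (hg : ‖g w‖ = 1) :
    Psi (comb f g w) = Psi w := by
  simp [Psi, comb, norm_smul, hf, hg]

lemma cd_norm_fst : ContDiffOn ℝ 1 (fun w : E × E => ‖w.1‖) (Om E) :=
  contDiffOn_fst.norm ℝ (fun _ hw => hw.1)
lemma cd_norm_snd : ContDiffOn ℝ 1 (fun w : E × E => ‖w.2‖) (Om E) :=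
  contDiffOn_snd.norm ℝ (fun _ hw => hw.2)

lemma sm_qa : Sm (qa (E := E)) := by
  refine ⟨(cd_norm_fst.inv fun w hw => norm_ne_zero_iff.2 hw.1).smul contDiffOn_fst, fun w hw => ?_⟩
  simp [qa, norm_smul, norm_ne_zero_iff.2 hw.1]
lemma sm_qb : Sm (qb (E := E)) := by
  refine ⟨(cd_norm_snd.inv fun w hw => norm_ne_zero_iff.2 hw.2).smul contDiffOn_snd, fun w hw => ?_⟩
  simp [qb, norm_smul, norm_ne_zero_iff.2 hw.2]

lemma comb_cd {f g : E × E → E} (hf : Sm f) (hg : Sm g) : ContDiffOn ℝ 1 (comb f g) (Om E) :=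
  (cd_norm_fst.smul hf.1).prodMk (cd_norm_snd.smul hg.1)

variable [FiniteDimensional ℝ E] [MeasurableSpace E] [BorelSpace E]

noncomputable def dInt (f g : E × E → E) : ℝ := ∫ w, Psi w * (fderiv ℝ (comb f g) w).det

lemma Psi_int_pos [Nontrivial E] : 0 < ∫ w : E × E, Psi w := by
  obtain ⟨v, hv⟩ := exists_norm_eq E (show (0:ℝ) ≤ √2 by positivity)
  apply Psi_contDiff.continuous.integral_pos_of_hasCompactSupport_nonneg_nonzero Psi_compact
    Psi_nonneg (x := (v, v))
  have : thb 2 = 1 := thb.one_of_mem_closedBall (by simp [thb])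
  simp [Psi, hv, this]

lemma dInt_integrable {f g : E × E → E} (hf : Sm f) (hg : Sm g) :
    Integrable (fun w => Psi w * (fderiv ℝ (comb f g) w).det) := by
  have hc : Continuous (fun w => Psi w * (fderiv ℝ (comb f g) w).det) := by
    apply continuous_of_tsupport
    intro w hw
    have hw' : w ∈ Om E := tsupport_Psi_Om (tsupport_mul_subset_left hw)
    refine Psi_contDiff.continuous.continuousAt.mul ?_
    exact ContinuousLinearMap.continuous_det.continuousAt.comp
      (((comb_cd hf hg).continuousOn_fderiv_of_isOpen isOpen_Om le_rfl).continuousAt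
        (isOpen_Om.mem_nhds hw'))
  exact hc.integrable_of_hasCompactSupport (Psi_compact.mul_right)

lemma dInt_congr {f g f' g' : E × E → E}  (h1 : EqOn f f' (Om E)) (h2 : EqOn g g' (Om E)) :
    dInt f g = dInt f' g' := by
  unfold dInt
  congr 1; ext w
  by_cases hw : w ∈ Om E
  · congr 2
    apply Filter.EventuallyEq.fderiv_eq
    filter_upwards [isOpen_Om.mem_nhds hw] with z hz
    simp [comb, h1 hz, h2 hz]
  · rw [image_eq_zero_of_notMem_tsupport (fun h => hw (tsupport_Psi_Om h))]; simp

lemma dInt_homotopy {F G : ℝ → E × E → E}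
    (hF : ContDiffOn ℝ 1 (fun q : ℝ × E × E => F q.1 q.2) (univ ×ˢ Om E))
    (hG : ContDiffOn ℝ 1 (fun q : ℝ × E × E => G q.1 q.2) (univ ×ˢ Om E))
    (hF1 : ∀ t, ∀ w ∈ Om E, ‖F t w‖ = 1) (hG1 : ∀ t, ∀ w ∈ Om E, ‖G t w‖ = 1) :
    dInt (F 0) (G 0) = dInt (F 1) (G 1) := by
  have hst : ContDiff ℝ 1 Real.smoothTransition := Real.smoothTransition.contDiff
  have hsub : ContDiffOn ℝ 1 (fun q : ℝ × E × E => (Real.smoothTransition q.1, q.2)) (univ ×ˢ Om E) :=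
    ((hst.comp contDiff_fst).prodMk contDiff_snd).contDiffOn
  have hmaps : MapsTo (fun q : ℝ × E × E => (Real.smoothTransition q.1, q.2)) (univ ×ˢ Om E)
    (univ ×ˢ Om E) := fun q hq => ⟨mem_univ _, hq.2⟩
  have hm2 : MapsTo (fun q : ℝ × E × E => q.2) (univ ×ˢ Om E) (Om E) := fun q hq => hq.2
  haveI : (volume : Measure (E × E)).IsAddHaarMeasure := Measure.prod.instIsAddHaarMeasure _ _
  have := homotopy_inv (volume : Measure (E × E)) isOpen_Om
    (Φ := fun q => comb (F (Real.smoothTransition q.1)) (G (Real.smoothTransition q.1)) q.2)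
    (ψ := Psi) (Ψ := Psi) ?_ Psi_contDiff Psi_compact tsupport_Psi_Om
    (Psi_contDiff.differentiable one_ne_zero) ?_ ?_ ?_
  · simpa [dInt] using this
  · exact ((cd_norm_fst.comp contDiffOn_snd hm2).smul (hF.comp hsub hmaps)).prodMk
      ((cd_norm_snd.comp contDiffOn_snd hm2).smul (hG.comp hsub hmaps))
  · intro t w hw
    exact (Psi_comb w (hF1 _ w hw) (hG1 _ w hw)).symm
  · intro t ht w hw
    simp [Real.smoothTransition.zero_of_nonpos ht]
  · intro t ht w hw
    simp [Real.smoothTransition.one_of_one_le ht]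

lemma dInt_ab : dInt (qa (E := E)) qb = ∫ w : E × E, Psi w := by
  unfold dInt
  congr 1; ext w
  by_cases hw : w ∈ Om E
  · have : comb (qa (E := E)) qb =ᶠ[𝓝 w] id := by
      filter_upwards [isOpen_Om.mem_nhds hw] with z hz
      simp [comb, qa, qb, smul_smul, norm_ne_zero_iff.2 hz.1, norm_ne_zero_iff.2 hz.2]
    rw [this.fderiv_eq, fderiv_id]
    simp [ContinuousLinearMap.det]
  · rw [image_eq_zero_of_notMem_tsupport (fun h => hw (tsupport_Psi_Om h))]; simp

lemma det_zero_of_factor {W Z : Type*} [AddCommGroup W] [Module ℝ W] [FiniteDimensional ℝ W]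
    [AddCommGroup Z] [Module ℝ Z] [FiniteDimensional ℝ Z] (A : W →ₗ[ℝ] Z) (B : Z →ₗ[ℝ] W)
    (h : Module.finrank ℝ Z < Module.finrank ℝ W) : LinearMap.det (B ∘ₗ A) = 0 := by
  rw [LinearMap.det_eq_zero_iff_ker_ne_bot]
  intro hk
  have : LinearMap.ker A = ⊥ := by
    rw [eq_bot_iff, ← hk]; intro x hx; simp [LinearMap.mem_ker] at hx; simp [LinearMap.mem_ker, hx]
  have := LinearMap.finrank_le_finrank_of_injective (LinearMap.ker_eq_bot.1 this)
  omega

lemma dInt_aa (hd : 2 ≤ Module.finrank ℝ E) : dInt (qa (E := E)) qa = 0 := by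
  unfold dInt
  rw [integral_eq_zero_of_ae]
  refine Eventually.of_forall fun w => ?_
  simp only [Pi.zero_apply]
  by_cases hw : w ∈ Om E
  · set A : E × E → E × ℝ := fun w => (w.1, ‖w.2‖)
    set B : E × ℝ → E × E := fun z => (z.1, z.2 • ‖z.1‖⁻¹ • z.1)
    have : comb (qa (E := E)) qa =ᶠ[𝓝 w] B ∘ A := by
      filter_upwards [isOpen_Om.mem_nhds hw] with z hz
      simp [comb, qa, A, B, smul_smul, norm_ne_zero_iff.2 hz.1]
    have hA : DifferentiableAt ℝ A w := differentiableAt_fst.prodMk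
      (differentiableAt_snd.norm ℝ hw.2)
    have hB : DifferentiableAt ℝ B (A w) := differentiableAt_fst.prodMk
      (differentiableAt_snd.fun_smul (((DifferentiableAt.norm (f := fun z : E × ℝ => z.1) ℝ differentiableAt_fst hw.1).fun_inv
        (norm_ne_zero_iff.2 hw.1)).fun_smul differentiableAt_fst))
    rw [this.fderiv_eq, fderiv_comp _ hB hA]
    have := det_zero_of_factor (fderiv ℝ A w : E × E →ₗ[ℝ] E × ℝ) (fderiv ℝ B (A w) : E × ℝ →ₗ[ℝ] E × E)
      (by simp; omega)
    simp only [ContinuousLinearMap.det, mul_eq_zero]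
    right; exact this
  · rw [image_eq_zero_of_notMem_tsupport (fun h => hw (tsupport_Psi_Om h))]; simp

lemma dInt_bb (hd : 2 ≤ Module.finrank ℝ E) : dInt (qb (E := E)) qb = 0 := by
  unfold dInt
  rw [integral_eq_zero_of_ae]
  refine Eventually.of_forall fun w => ?_
  simp only [Pi.zero_apply]
  by_cases hw : w ∈ Om E
  · set A : E × E → E × ℝ := fun w => (w.2, ‖w.1‖)
    set B : E × ℝ → E × E := fun z => (z.2 • ‖z.1‖⁻¹ • z.1, z.1)
    have : comb (qb (E := E)) qb =ᶠ[𝓝 w] B ∘ A := by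
      filter_upwards [isOpen_Om.mem_nhds hw] with z hz
      simp [comb, qb, A, B, smul_smul, norm_ne_zero_iff.2 hz.2]
    have hA : DifferentiableAt ℝ A w := differentiableAt_snd.prodMk
      (differentiableAt_fst.norm ℝ hw.1)
    have hB : DifferentiableAt ℝ B (A w) := DifferentiableAt.prodMk
      (differentiableAt_snd.fun_smul (((DifferentiableAt.norm (f := fun z : E × ℝ => z.1) ℝ differentiableAt_fst hw.2).fun_inv
        (norm_ne_zero_iff.2 hw.2)).fun_smul differentiableAt_fst)) differentiableAt_fst
    rw [this.fderiv_eq, fderiv_comp _ hB hA]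
    have := det_zero_of_factor (fderiv ℝ A w : E × E →ₗ[ℝ] E × ℝ) (fderiv ℝ B (A w) : E × ℝ →ₗ[ℝ] E × E)
      (by simp; omega)
    simp only [ContinuousLinearMap.det, mul_eq_zero]
    right; exact this
  · rw [image_eq_zero_of_notMem_tsupport (fun h => hw (tsupport_Psi_Om h))]; simp

lemma dInt_ident {f g : E × E → E} (hf : Sm f) (hg : Sm g)
    (h : ∀ w ∈ Om E, f =ᶠ[𝓝 w] qb (E := E) ∨ g =ᶠ[𝓝 w] qb (E := E)) :
    dInt f g + dInt (qb (E := E)) qb = dInt f qb + dInt qb g := by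
  unfold dInt
  rw [← integral_add (dInt_integrable hf hg) (dInt_integrable sm_qb sm_qb),
    ← integral_add (dInt_integrable hf sm_qb) (dInt_integrable sm_qb hg)]
  congr 1; ext w
  by_cases hw : w ∈ Om E
  · rcases h w hw with h | h
    · have e1 : comb f g =ᶠ[𝓝 w] comb qb g := by
        filter_upwards [h] with z hz; simp [comb, hz]
      have e2 : comb f qb =ᶠ[𝓝 w] comb qb qb := by
        filter_upwards [h] with z hz; simp [comb, hz]
      rw [e1.fderiv_eq, e2.fderiv_eq]; ring
    · have e1 : comb f g =ᶠ[𝓝 w] comb f qb := by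
        filter_upwards [h] with z hz; simp [comb, hz]
      have e2 : comb qb g =ᶠ[𝓝 w] comb qb qb := by
        filter_upwards [h] with z hz; simp [comb, hz]
      rw [e1.fderiv_eq, e2.fderiv_eq]
  · rw [image_eq_zero_of_notMem_tsupport (fun h => hw (tsupport_Psi_Om h))]; simp

lemma hasFDerivAt_norm' {x : E} (hx : x ≠ 0) :
    HasFDerivAt (fun y : E => ‖y‖) (‖x‖⁻¹ • innerSL ℝ x) x := by
  have h := ((hasFDerivAt_id x).norm_sq).sqrt (by simpa using hx)
  have e : (fun y : E => √(‖id y‖^2)) = fun y => ‖y‖ := by ext y; simp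
  rw [e] at h
  refine h.congr_fderiv ?_
  ext v
  have := norm_ne_zero_iff.2 hx
  simp; field_simp

lemma det_swap : LinearMap.det ((LinearMap.snd ℝ E E).prod (LinearMap.fst ℝ E E)) =
    (-1) ^ Module.finrank ℝ E := by
  let e : (E × E) ≃ₗ[ℝ] (E × E) := LinearEquiv.ofLinear
    ((LinearMap.fst ℝ E E + LinearMap.snd ℝ E E).prod (LinearMap.fst ℝ E E - LinearMap.snd ℝ E E))
    ((1/2 : ℝ) • (LinearMap.fst ℝ E E + LinearMap.snd ℝ E E).prod (LinearMap.fst ℝ E E - LinearMap.snd ℝ E E))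
    (by ext <;> simp [← two_smul ℝ]) (by ext <;> simp [← two_smul ℝ])
  rw [← LinearMap.det_conj _ e]
  have : (e : E × E →ₗ[ℝ] E × E) ∘ₗ (LinearMap.snd ℝ E E).prod (LinearMap.fst ℝ E E) ∘ₗ (e.symm : E × E →ₗ[ℝ] E × E)
    = LinearMap.prodMap LinearMap.id ((-1 : ℝ) • LinearMap.id) := by
    ext <;> simp [e, ← two_smul ℝ]
    match_scalars; norm_num
  rw [this, LinearMap.det_prodMap, LinearMap.det_smul]; simp

lemma det_ba {w : E × E} (hw : w ∈ Om E) :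
    (fderiv ℝ (comb (qb (E := E)) qa) w).det = (-1) ^ (Module.finrank ℝ E + 1) := by
  have n1 := norm_ne_zero_iff.2 hw.1
  have n2 := norm_ne_zero_iff.2 hw.2
  have N1 : HasFDerivAt (fun y : E × E => ‖y.1‖) _ w := (hasFDerivAt_norm' hw.1).comp w hasFDerivAt_fst
  have N2 : HasFDerivAt (fun y : E × E => ‖y.2‖) _ w := (hasFDerivAt_norm' hw.2).comp w hasFDerivAt_snd
  have I1 := (hasDerivAt_inv n1).comp_hasFDerivAt w N1
  have I2 := (hasDerivAt_inv n2).comp_hasFDerivAt w N2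
  have H : HasFDerivAt (comb (qb (E := E)) qa) _ w :=
    (N1.fun_smul (I2.fun_smul hasFDerivAt_snd)).prodMk (N2.fun_smul (I1.fun_smul hasFDerivAt_fst))
  rw [H.fderiv]
  set r : ℝ := ‖w.1‖ * ‖w.2‖⁻¹ with hr
  have hr0 : r ≠ 0 := mul_ne_zero n1 (inv_ne_zero n2)
  set a : E := ‖w.2‖⁻¹ • w.2 with ha
  set b : E := ‖w.1‖⁻¹ • w.1 with hb
  rw [ContinuousLinearMap.det]
  have key : ∀ L : (E × E) →ₗ[ℝ] (E × E), L = ((LinearMap.prodMap (r • LinearMap.id) (r⁻¹ • LinearMap.id)) ∘ₗ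
      (LinearMap.transvection ((innerSL ℝ b : E →ₗ[ℝ] ℝ) ∘ₗ LinearMap.snd ℝ E E -
        r • (innerSL ℝ a : E →ₗ[ℝ] ℝ) ∘ₗ LinearMap.fst ℝ E E) (r⁻¹ • a, -b)) ∘ₗ
      ((LinearMap.snd ℝ E E).prod (LinearMap.fst ℝ E E))) →
      LinearMap.det L = (-1) ^ (Module.finrank ℝ E + 1) := by
    intro L hL
    rw [hL, LinearMap.det_comp, LinearMap.det_comp, LinearMap.transvection.det,
      LinearMap.det_prodMap, det_swap, LinearMap.det_smul, LinearMap.det_smul]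
    have ea : ‖a‖ = 1 := by simp [ha, norm_smul, n2]
    have eb : ‖b‖ = 1 := by simp [hb, norm_smul, n1]
    simp [ea, eb, inner_smul_right, hr0]
    norm_num
    ring
  apply key
  apply LinearMap.ext
  rintro ⟨u, v⟩
  apply Prod.ext
  · simp [LinearMap.transvection, ha, hb, hr, inner_smul_left, qa]
    match_scalars <;> field_simp
    ring
  · simp [LinearMap.transvection, ha, hb, hr, inner_smul_left, qa]
    match_scalars <;> field_simp
    ring

lemma dInt_ba (hd : Odd (Module.finrank ℝ E)) : dInt (qb (E := E)) qa = ∫ w : E × E, Psi w := by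
  unfold dInt
  congr 1; ext w
  by_cases hw : w ∈ Om E
  · rw [det_ba hw, hd.add_one.neg_one_pow, mul_one]
  · rw [image_eq_zero_of_notMem_tsupport (fun h => hw (tsupport_Psi_Om h))]; simp

end Deg
end
end PaperTC


namespace PaperTC
section
open Set MeasureTheory Topology Filter
section Smoothing

lemma smooth_approx {X Y : Type*} [NormedAddCommGroup X] [NormedSpace ℝ X] [FiniteDimensional ℝ X]
    [NormedAddCommGroup Y] [NormedSpace ℝ Y] [FiniteDimensional ℝ Y] {C : Set X} (hC : IsClosed C)
    {f : X → Y} (hf : ContinuousOn f C) {ε : ℝ} (hε : 0 < ε) :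
    ∃ P : X → Y, ContDiff ℝ 1 P ∧ ∀ x ∈ C, ‖P x - f x‖ < ε := by
  obtain ⟨g, hg⟩ := ContinuousMap.exists_restrict_eq hC (⟨C.restrict f, hf.restrict⟩ : C(C, Y))
  obtain ⟨P, hP⟩ := g.continuous.exists_contDiff_approx 1 (ε := fun _ => ε) continuous_const (fun _ => hε)
  refine ⟨P, hP.1, fun x hx => ?_⟩
  have h1 := hP.2.1 x
  have h2 : g x = f x := DFunLike.congr_fun hg ⟨x, hx⟩
  rw [← dist_eq_norm, ← h2]; exact h1

variable {E : Type*} [NormedAddCommGroup E] [InnerProductSpace ℝ E]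

noncomputable def nrm (v : E) : E := ‖v‖⁻¹ • v

lemma norm_nrm {v : E} (hv : v ≠ 0) : ‖nrm v‖ = 1 := by
  simp [nrm, norm_smul, norm_ne_zero_iff.2 hv]

lemma nrm_of_unit {v : E} (hv : ‖v‖ = 1) : nrm v = v := by simp [nrm, hv]

lemma inner_nrm_pos {v a : E} (h : 0 < inner ℝ v a) : 0 < inner ℝ (nrm v) a := by
  have : v ≠ 0 := by rintro rfl; simp at h
  rw [nrm, inner_smul_left]
  have := norm_pos_iff.2 this
  simp; positivity

lemma ne_zero_of_inner_pos {v a : E} (h : 0 < inner ℝ v a) : v ≠ 0 := by rintro rfl; simp at h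

lemma inner_pos_of_near {P a : E} (ha : ‖a‖ = 1) (h : ‖P - a‖ < 1) : 0 < inner ℝ P a := by
  have h1 : inner ℝ P a = inner ℝ (P - a) a + 1 := by
    rw [inner_sub_left, real_inner_self_eq_norm_sq, ha]; ring
  have h2 := abs_real_inner_le_norm (P - a) a
  rw [ha, mul_one] at h2
  have := (abs_le.1 h2).1
  linarith

lemma nrm_contDiffOn {X : Type*} [NormedAddCommGroup X] [NormedSpace ℝ X] {s : Set X} {P : X → E}
    (hP : ContDiffOn ℝ 1 P s) (h0 : ∀ x ∈ s, P x ≠ 0) : ContDiffOn ℝ 1 (fun x => nrm (P x)) s :=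
  ((hP.norm ℝ h0).inv fun x hx => norm_ne_zero_iff.2 (h0 x hx)).smul hP

noncomputable def nq (w : E × E) : E × E := (qa w, qb w)

def KK (E : Type*) [NormedAddCommGroup E] : Set (E × E) := Metric.sphere 0 1 ×ˢ Metric.sphere 0 1

lemma nq_mem {w : E × E} (hw : w ∈ Om E) : nq w ∈ KK E :=
  ⟨by simpa [nq] using sm_qa.2 w hw, by simpa [nq] using sm_qb.2 w hw⟩

lemma nq_cd : ContDiffOn ℝ 1 (nq (E := E)) (Om E) := sm_qa.1.prodMk sm_qb.1

lemma isClosed_KK : IsClosed (KK E) := Metric.isClosed_sphere.prod Metric.isClosed_sphere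

variable [FiniteDimensional ℝ E] [MeasurableSpace E] [BorelSpace E]

def HomEq (F0 F1 : E × E → E) : Prop :=
  ∀ G, Sm G → dInt F0 G = dInt F1 G ∧ dInt G F0 = dInt G F1

lemma HomEq.trans {F0 F1 F2 : E × E → E} (h : HomEq F0 F1) (h' : HomEq F1 F2) : HomEq F0 F2 :=
  fun G hG => ⟨(h G hG).1.trans (h' G hG).1, (h G hG).2.trans (h' G hG).2⟩

lemma homEq_of_family {F : ℝ → E × E → E}
    (hF : ContDiffOn ℝ 1 (fun q : ℝ × E × E => F q.1 q.2) (univ ×ˢ Om E))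
    (hF1 : ∀ t, ∀ w ∈ Om E, ‖F t w‖ = 1) : HomEq (F 0) (F 1) := by
  intro G hG
  have hG' : ContDiffOn ℝ 1 (fun q : ℝ × E × E => (fun _ => G : ℝ → E × E → E) q.1 q.2) (univ ×ˢ Om E) :=
    hG.1.comp contDiffOn_snd (fun q hq => hq.2)
  exact ⟨dInt_homotopy hF hG' hF1 (fun _ => hG.2), dInt_homotopy hG' hF (fun _ => hG.2) hF1⟩

lemma HomEq.congr {F0 F1 F0' F1' : E × E → E} (h : HomEq F0 F1) (h0 : EqOn F0 F0' (Om E))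
    (h1 : EqOn F1 F1' (Om E)) : HomEq F0' F1' := by
  intro G hG
  rw [← dInt_congr h0 (fun _ _ => rfl : EqOn G G (Om E)),
    ← dInt_congr h1 (fun _ _ => rfl : EqOn G G (Om E)),
    ← dInt_congr (fun _ _ => rfl : EqOn G G (Om E)) h0,
    ← dInt_congr (fun _ _ => rfl : EqOn G G (Om E)) h1]
  exact h G hG

lemma sT_cd : ContDiff ℝ 1 Real.smoothTransition := Real.smoothTransition.contDiff

lemma homEq_straight {F0 F1 a : E × E → E} (h0 : Sm F0) (h1 : Sm F1)
    (p0 : ∀ w ∈ Om E, 0 < inner ℝ (F0 w) (a w)) (p1 : ∀ w ∈ Om E, 0 < inner ℝ (F1 w) (a w)) :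
    HomEq F0 F1 := by
  have hpos : ∀ t, ∀ w ∈ Om E, 0 < inner ℝ ((1 - Real.smoothTransition t) • F0 w +
      Real.smoothTransition t • F1 w) (a w) := by
    intro t w hw
    have a1 := Real.smoothTransition.nonneg t
    have a2 := Real.smoothTransition.le_one t
    have b1 := p0 w hw
    have b2 := p1 w hw
    simp only [inner_add_left, inner_smul_left, RCLike.conj_to_real]
    rcases a2.lt_or_eq with h | h
    · have : 0 < 1 - Real.smoothTransition t := by linarith
      positivity
    · rw [h]; simpa using b2
  have := homEq_of_family (F := fun t w => nrm ((1 - Real.smoothTransition t) • F0 w +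
    Real.smoothTransition t • F1 w)) ?_ ?_
  · refine this.congr ?_ ?_
    · intro w hw; simp [nrm_of_unit (h0.2 w hw)]
    · intro w hw; simp [nrm_of_unit (h1.2 w hw)]
  · have m : MapsTo (fun q : ℝ × E × E => q.2) (univ ×ˢ Om E) (Om E) := fun q hq => hq.2
    have c : ContDiffOn ℝ 1 (fun q : ℝ × E × E => Real.smoothTransition q.1) (univ ×ˢ Om E) :=
      (sT_cd.comp contDiff_fst).contDiffOn
    apply nrm_contDiffOn
    · exact ((contDiffOn_const.sub c).smul (h0.1.comp contDiffOn_snd m)).add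
        (c.smul (h1.1.comp contDiffOn_snd m))
    · intro q hq; exact ne_zero_of_inner_pos (hpos _ _ hq.2)
  · intro t w hw; exact norm_nrm (ne_zero_of_inner_pos (hpos t w hw))

lemma homEq_of_homotopy {F0 F1 : E × E → E} (h0 : Sm F0) (h1 : Sm F1)
    {H : ℝ × E × E → E} (hH : ContinuousOn H (Icc 0 1 ×ˢ KK E))
    (hH1 : ∀ q ∈ Icc (0:ℝ) 1 ×ˢ KK E, ‖H q‖ = 1)
    (p0 : ∀ w ∈ Om E, 0 < inner ℝ (F0 w) (H (0, nq w)))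
    (p1 : ∀ w ∈ Om E, 0 < inner ℝ (F1 w) (H (1, nq w))) : HomEq F0 F1 := by
  obtain ⟨P, hP, hPH⟩ := smooth_approx (isClosed_Icc.prod isClosed_KK) hH one_pos
  have hpos : ∀ t, ∀ w ∈ Om E, 0 < inner ℝ (P (Real.smoothTransition t, nq w))
      (H (Real.smoothTransition t, nq w)) := by
    intro t w hw
    have : (Real.smoothTransition t, nq w) ∈ Icc (0:ℝ) 1 ×ˢ KK E :=
      ⟨⟨Real.smoothTransition.nonneg t, Real.smoothTransition.le_one t⟩, nq_mem hw⟩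
    exact inner_pos_of_near (hH1 _ this) (hPH _ this)
  set F : ℝ → E × E → E := fun t w => nrm (P (Real.smoothTransition t, nq w))
  have hF : ContDiffOn ℝ 1 (fun q : ℝ × E × E => F q.1 q.2) (univ ×ˢ Om E) := by
    have m : MapsTo (fun q : ℝ × E × E => q.2) (univ ×ˢ Om E) (Om E) := fun q hq => hq.2
    have c : ContDiffOn ℝ 1 (fun q : ℝ × E × E => Real.smoothTransition q.1) (univ ×ˢ Om E) :=
      (sT_cd.comp contDiff_fst).contDiffOn
    apply nrm_contDiffOn
    · exact hP.comp_contDiffOn (c.prodMk (nq_cd.comp contDiffOn_snd m))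
    · intro q hq; exact ne_zero_of_inner_pos (hpos _ _ hq.2)
  have hF1 : ∀ t, ∀ w ∈ Om E, ‖F t w‖ = 1 := fun t w hw =>
    norm_nrm (ne_zero_of_inner_pos (hpos t w hw))
  have hFs : ∀ t, Sm (F t) := fun t =>
    ⟨hF.comp (contDiffOn_const.prodMk contDiffOn_id) (fun w hw => ⟨mem_univ _, hw⟩), hF1 t⟩
  have e1 := homEq_straight (a := fun w => H (0, nq w)) h0 (hFs 0) p0 (fun w hw => by
    have := inner_nrm_pos (hpos 0 w hw); simpa [F] using this)
  have e2 := homEq_straight (a := fun w => H (1, nq w)) (hFs 1) h1 (fun w hw => by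
    have := inner_nrm_pos (hpos 1 w hw); simpa [F] using this) p1
  exact (e1.trans (homEq_of_family hF hF1)).trans e2

lemma exists_rel_rep {f : E × E → E} (hf : ContinuousOn f (KK E)) (hf1 : ∀ q ∈ KK E, ‖f q‖ = 1)
    {A B : Set (E × E)} (hA : IsClosed A) (hB : IsClosed B) (hAB : Disjoint A B)
    (hfB : ∀ q ∈ KK E, q ∉ B → f q = q.2) :
    ∃ F, Sm F ∧ (∀ w ∈ Om E, 0 < inner ℝ (F w) (f (nq w))) ∧
      ∀ w ∈ Om E, nq w ∈ A → F w = qb w := by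
  obtain ⟨P, hP, hPf⟩ := smooth_approx isClosed_KK hf one_pos
  obtain ⟨u, hu0, hu1, hu⟩ := exists_continuous_zero_one_of_isClosed hB hA hAB.symm
  obtain ⟨v, hv, hvu⟩ := smooth_approx isClosed_univ (u.continuous.continuousOn)
    (show (0:ℝ) < 1/4 by norm_num)
  set χ : E × E → ℝ := fun q => Real.smoothTransition (2 * v q - 1/2)
  have hχ : ContDiff ℝ 1 χ := sT_cd.comp ((contDiff_const.mul hv).sub contDiff_const)
  have χA : ∀ q ∈ A, χ q = 1 := by
    intro q hq
    apply Real.smoothTransition.one_of_one_le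
    have h1 := hvu q (mem_univ _)
    rw [hu1 hq, Real.norm_eq_abs, abs_lt] at h1
    simp only [Pi.one_apply] at h1
    linarith
  have χB : ∀ q ∈ B, χ q = 0 := by
    intro q hq
    apply Real.smoothTransition.zero_of_nonpos
    have h1 := hvu q (mem_univ _)
    rw [hu0 hq, Real.norm_eq_abs, abs_lt] at h1
    simp only [Pi.zero_apply] at h1
    linarith
  have hpos : ∀ w ∈ Om E, 0 < inner ℝ (χ (nq w) • qb w + (1 - χ (nq w)) • P (nq w)) (f (nq w)) := by
    intro w hw
    have hk := nq_mem hw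
    have hPp := inner_pos_of_near (hf1 _ hk) (hPf _ hk)
    by_cases hb : nq w ∈ B
    · simpa [χB _ hb] using hPp
    · have e := hfB _ hk hb
      have e' : inner ℝ (qb w) (f (nq w)) = 1 := by
        rw [e]; simp [nq, sm_qb.2 w hw]
      have a1 : 0 ≤ χ (nq w) := Real.smoothTransition.nonneg _
      have a2 : χ (nq w) ≤ 1 := Real.smoothTransition.le_one _
      simp only [inner_add_left, inner_smul_left, RCLike.conj_to_real]
      rw [e']
      rcases a2.lt_or_eq with h | h
      · have : 0 < 1 - χ (nq w) := by linarith
        positivity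
      · rw [h]; simp
  refine ⟨fun w => nrm (χ (nq w) • qb w + (1 - χ (nq w)) • P (nq w)), ⟨?_, ?_⟩, ?_, ?_⟩
  · apply nrm_contDiffOn
    · have c := hχ.comp_contDiffOn (nq_cd (E := E))
      exact (c.smul sm_qb.1).add ((contDiffOn_const.sub c).smul (hP.comp_contDiffOn nq_cd))
    · intro w hw; exact ne_zero_of_inner_pos (hpos w hw)
  · intro w hw; exact norm_nrm (ne_zero_of_inner_pos (hpos w hw))
  · intro w hw; exact inner_nrm_pos (hpos w hw)
  · intro w hw hwA
    simp [χA _ hwA, nrm_of_unit (sm_qb.2 w hw)]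

lemma qa_self {w : E × E} (hw : w ∈ Om E) : 0 < inner ℝ (qa w) (nq w).1 := by
  simp [nq, sm_qa.2 w hw]
lemma qb_self {w : E × E} (hw : w ∈ Om E) : 0 < inner ℝ (qb w) (nq w).2 := by
  simp [nq, sm_qb.2 w hw]

theorem no_one {H : ℝ × E × E → E} (hH : ContinuousOn H (Icc 0 1 ×ˢ KK E))
    (hH1 : ∀ q ∈ Icc (0:ℝ) 1 ×ˢ KK E, ‖H q‖ = 1) (h0 : ∀ q ∈ KK E, H (0, q) = q.1)
    (h1 : ∀ q ∈ KK E, H (1, q) = q.2) (hd : 2 ≤ Module.finrank ℝ E) : False := by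
  have : HomEq (qa (E := E)) qb := homEq_of_homotopy sm_qa sm_qb hH hH1
    (fun w hw => by rw [h0 _ (nq_mem hw)]; exact qa_self hw)
    (fun w hw => by rw [h1 _ (nq_mem hw)]; exact qb_self hw)
  have e := (this qb sm_qb).1
  rw [dInt_ab, dInt_bb hd] at e
  haveI : Nontrivial E := Module.nontrivial_of_finrank_pos (R := ℝ) (by omega)
  exact (Psi_int_pos (E := E)).ne' e

theorem no_two {H : Fin 2 → ℝ × E × E → E} (hH : ∀ i, ContinuousOn (H i) (Icc 0 1 ×ˢ KK E))
    (hH1 : ∀ i, ∀ q ∈ Icc (0:ℝ) 1 ×ˢ KK E, ‖H i q‖ = 1) (h0 : ∀ i, ∀ q ∈ KK E, H i (0, q) = q.1)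
    {A B : Fin 2 → Set (E × E)} (hA : ∀ i, IsClosed (A i)) (hB : ∀ i, IsClosed (B i))
    (hAB : ∀ i, Disjoint (A i) (B i))
    (h1 : ∀ i, ∀ q ∈ KK E, q ∉ B i → H i (1, q) = q.2)
    (hcov : ∀ q ∈ KK E, ∃ i, ∀ᶠ q' in 𝓝 q, q' ∈ KK E → q' ∈ A i)
    (hd : 2 ≤ Module.finrank ℝ E) (hodd : Odd (Module.finrank ℝ E)) : False := by
  have key : ∀ i, ∃ F, Sm F ∧ HomEq (qa (E := E)) F ∧ ∀ w ∈ Om E, nq w ∈ A i → F w = qb w := by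
    intro i
    have c : ContinuousOn (fun q => H i (1, q)) (KK E) :=
      (hH i).comp (by fun_prop) (fun q hq => ⟨by simp, hq⟩)
    obtain ⟨F, hF, hp, hA⟩ := exists_rel_rep c (fun q hq => hH1 i _ ⟨by simp, hq⟩) (hA i) (hB i)
      (hAB i) (h1 i)
    exact ⟨F, hF, homEq_of_homotopy sm_qa hF (hH i) (hH1 i)
      (fun w hw => by rw [h0 _ _ (nq_mem hw)]; exact qa_self hw) hp, hA⟩
  choose F hF hhom hFA using key
  have e := dInt_ident (hF 0) (hF 1) (fun w hw => by
    obtain ⟨i, hi⟩ := hcov _ (nq_mem hw)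
    have hc : ContinuousAt nq w := nq_cd.continuousOn.continuousAt (isOpen_Om.mem_nhds hw)
    have : F i =ᶠ[𝓝 w] qb := by
      filter_upwards [hc.eventually hi, isOpen_Om.mem_nhds hw] with z hz hzO
      exact hFA i z hzO (hz (nq_mem hzO))
    fin_cases i
    · exact Or.inl this
    · exact Or.inr this)
  rw [← (hhom 0 _ (hF 1)).1, ← (hhom 0 _ sm_qb).1, ← (hhom 1 _ sm_qb).2, ← (hhom 1 _ sm_qa).2,
    dInt_aa hd, dInt_bb hd, dInt_ab, dInt_ba hodd] at e
  haveI : Nontrivial E := Module.nontrivial_of_finrank_pos (R := ℝ) (by omega)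
  have := Psi_int_pos (E := E)
  linarith

end Smoothing
end
end PaperTC


namespace PaperTC
section
open Set MeasureTheory Topology Filter
section Top

lemma planner_homotopy {Y : Type*} [TopologicalSpace Y] [NormalSpace (Y × Y)]
    {U C : Set (Y × Y)} (hU : IsOpen U) (hC : IsClosed C) (hCU : C ⊆ U)
    {s : Y × Y → C(I, Y)} (hs : ContinuousOn s U) (hs01 : ∀ p ∈ U, s p 0 = p.1 ∧ s p 1 = p.2) :
    ∃ (O : Set (Y × Y)) (H : I × Y × Y → Y), IsOpen O ∧ C ⊆ O ∧ Continuous H ∧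
      (∀ q, H (0, q) = q.1) ∧ ∀ q ∈ O, H (1, q) = q.2 := by
  classical
  obtain ⟨O', hO', hCO', hO'U⟩ := normal_exists_closure_subset hC hU hCU
  obtain ⟨O, hO, hCO, hOO'⟩ := normal_exists_closure_subset hC hO' hCO'
  obtain ⟨φ, hφ0, hφ1, hφ⟩ := exists_continuous_zero_one_of_isClosed hO'.isClosed_compl
    (isClosed_closure (s := O)) (disjoint_compl_left_iff_subset.2 hOO')
  set H : I × Y × Y → Y := fun z => if z.2 ∈ U then s z.2 (z.1 * ⟨φ z.2, hφ z.2⟩) else z.2.1 with hH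
  refine ⟨O, H, hO, hCO, ?_, ?_, ?_⟩
  · rw [continuous_iff_continuousAt]
    rintro ⟨t, q⟩
    by_cases hq : q ∈ U
    · have hn : ∀ᶠ z : I × Y × Y in 𝓝 (t, q), z.2 ∈ U :=
        continuous_snd.continuousAt.eventually (hU.mem_nhds hq)
      have : ContinuousAt (fun z : I × Y × Y => s z.2 (z.1 * ⟨φ z.2, hφ z.2⟩)) (t, q) := by
        have h1 : ContinuousAt (fun z : I × Y × Y => s z.2) (t, q) :=
          ContinuousAt.comp (f := fun z : I × Y × Y => z.2) (hs.continuousAt (hU.mem_nhds hq)) continuous_snd.continuousAt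
        have h2 : ContinuousAt (fun z : I × Y × Y => (z.1 * ⟨φ z.2, hφ z.2⟩ : I)) (t, q) := by
          apply Continuous.continuousAt
          exact continuous_fst.mul (Continuous.subtype_mk (φ.continuous.comp continuous_snd) _)
        exact h1.eval h2
      refine this.congr ?_
      filter_upwards [hn] with z hz
      simp [hH, hz]
    · have hq' : q ∈ (closure O')ᶜ := fun h => hq (hO'U h)
      have hn : ∀ᶠ z : I × Y × Y in 𝓝 (t, q), z.2 ∈ (closure O')ᶜ :=
        continuous_snd.continuousAt.eventually (isClosed_closure.isOpen_compl.mem_nhds hq')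
      have : ContinuousAt (fun z : I × Y × Y => z.2.1) (t, q) := by fun_prop
      refine this.congr ?_
      filter_upwards [hn] with z hz
      by_cases hzU : z.2 ∈ U
      · have e : φ z.2 = 0 := hφ0 (fun h => hz (subset_closure h))
        have e2 : (⟨φ z.2, hφ z.2⟩ : I) = 0 := Subtype.ext e
        simp only [hH, hzU, if_true, e2, mul_zero, (hs01 _ hzU).1]
      · simp [hH, hzU]
  · intro q
    by_cases hq : q ∈ U
    · simp [hH, hq, (hs01 _ hq).1]
    · simp [hH, hq]
  · intro q hq
    have hqU : q ∈ U := hO'U (subset_closure (hOO' (subset_closure hq)))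
    have e2 : (⟨φ q, hφ q⟩ : I) = 1 := Subtype.ext (hφ1 (subset_closure hq))
    simp only [hH, hqU, if_true, e2, mul_one, (hs01 _ hqU).2]

variable {E : Type*} [NormedAddCommGroup E] [InnerProductSpace ℝ E]

lemma ext_homotopy {H : I × Metric.sphere (0:E) 1 × Metric.sphere (0:E) 1 → Metric.sphere (0:E) 1}
    (hH : Continuous H) : ∃ H' : ℝ × E × E → E, ContinuousOn H' (Icc 0 1 ×ˢ KK E) ∧
      (∀ q ∈ Icc (0:ℝ) 1 ×ˢ KK E, ‖H' q‖ = 1) ∧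
      ∀ (t : I) (x y : Metric.sphere (0:E) 1), H' (t, x, y) = H (t, x, y) := by
  classical
  let H' : ℝ × E × E → E := fun z => if h : z ∈ Icc (0:ℝ) 1 ×ˢ KK E then
    (H (⟨z.1, h.1⟩, ⟨z.2.1, h.2.1⟩, ⟨z.2.2, h.2.2⟩) : E) else 0
  refine ⟨H', ?_, ?_, ?_⟩
  · rw [continuousOn_iff_continuous_restrict]
    have : (Icc (0:ℝ) 1 ×ˢ KK E).domRestrict H' = fun z =>
      (H (⟨z.1.1, z.2.1⟩, ⟨z.1.2.1, z.2.2.1⟩, ⟨z.1.2.2, z.2.2.2⟩) : E) := by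
      ext z
      have hz := z.2
      change H' z.1 = _
      simp only [H', dif_pos hz]
    rw [this]
    refine continuous_subtype_val.comp (hH.comp ?_)
    refine Continuous.prodMk ?_ (Continuous.prodMk ?_ ?_)
    · exact Continuous.subtype_mk (by fun_prop) _
    · exact Continuous.subtype_mk (by fun_prop) _
    · exact Continuous.subtype_mk (by fun_prop) _
  · intro q hq
    simp only [H', dif_pos hq]
    simp
  · intro t x y
    have : ((t : ℝ), (x : E), (y : E)) ∈ Icc (0:ℝ) 1 ×ˢ KK E := ⟨t.2, x.2, y.2⟩
    simp only [H', dif_pos this]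

variable [FiniteDimensional ℝ E]

theorem not_TCcover_one (hd : 2 ≤ Module.finrank ℝ E) : ¬ TCcover (Metric.sphere (0:E) 1) 1 := by
  rintro ⟨U, hU, hcov, hs⟩
  obtain ⟨s, hs, hs01⟩ := hs 0
  have hU0 : U 0 = univ := by
    rw [eq_univ_iff_forall]; intro x
    have : x ∈ ⋃ i, U i := hcov ▸ mem_univ x
    obtain ⟨i, hi⟩ := mem_iUnion.1 this
    rwa [Subsingleton.elim 0 i]
  obtain ⟨O, H, hO, hCO, hH, h0, h1⟩ := planner_homotopy (hU 0) isClosed_univ hU0.ge hs hs01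
  obtain ⟨H', c, n, e⟩ := ext_homotopy hH
  letI : MeasurableSpace E := borel E
  haveI : BorelSpace E := ⟨rfl⟩
  refine no_one c n ?_ ?_ hd
  · rintro ⟨x, y⟩ ⟨hx, hy⟩
    have := e 0 ⟨x, hx⟩ ⟨y, hy⟩
    rw [h0] at this
    simpa using this
  · rintro ⟨x, y⟩ ⟨hx, hy⟩
    have := e 1 ⟨x, hx⟩ ⟨y, hy⟩
    rw [h1 _ (hCO (mem_univ _))] at this
    simpa using this

theorem not_TCcover_two (hd : 2 ≤ Module.finrank ℝ E) (hodd : Odd (Module.finrank ℝ E)) :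
    ¬ TCcover (Metric.sphere (0:E) 1) 2 := by
  rintro ⟨U, hU, hcov, hs⟩
  choose s hs hs01 using hs
  obtain ⟨V, hV, hVo, hVU⟩ := exists_iUnion_eq_closure_subset hU (fun x => Set.toFinite _) hcov
  have := fun i => planner_homotopy (hU i) isClosed_closure (hVU i) (hs i) (hs01 i)
  choose O H hO hCO hH h0 h1 using this
  choose H' c n e using fun i => ext_homotopy (hH i)
  letI : MeasurableSpace E := borel E
  haveI : BorelSpace E := ⟨rfl⟩
  set j : Metric.sphere (0:E) 1 × Metric.sphere (0:E) 1 → E × E := fun q => (q.1, q.2)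
  have hj : IsClosedEmbedding j :=
    Metric.isClosed_sphere.isClosedEmbedding_subtypeVal.prodMap
      Metric.isClosed_sphere.isClosedEmbedding_subtypeVal
  have hjK : ∀ q ∈ KK E, ∃ z, j z = q := by
    rintro ⟨x, y⟩ ⟨hx, hy⟩; exact ⟨(⟨x, hx⟩, ⟨y, hy⟩), rfl⟩
  refine no_two c n ?_ (A := fun i => j '' closure (V i)) (B := fun i => j '' (O i)ᶜ)
    (fun i => hj.isClosedMap _ isClosed_closure) (fun i => hj.isClosedMap _ (hO i).isClosed_compl)
    ?_ ?_ ?_ hd hodd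
  · rintro i q hq
    obtain ⟨z, rfl⟩ := hjK q hq
    have := e i 0 z.1 z.2
    rw [h0] at this
    simpa using this
  · intro i
    rw [disjoint_image_iff hj.injective, disjoint_compl_right_iff_subset]
    exact hCO i
  · rintro i q hq hB
    obtain ⟨z, rfl⟩ := hjK q hq
    have hz : z ∈ O i := by
      by_contra h; exact hB (mem_image_of_mem _ h)
    have := e i 1 z.1 z.2
    rw [h1 _ _ hz] at this
    simpa using this
  · intro q hq
    obtain ⟨z, rfl⟩ := hjK q hq
    obtain ⟨i, hi⟩ := mem_iUnion.1 (hV ▸ mem_univ z : z ∈ ⋃ i, V i)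
    obtain ⟨W, hW, hWV⟩ := hj.isInducing.isOpen_iff.1 (hVo i)
    refine ⟨i, ?_⟩
    have hzW : j z ∈ W := by
      have : z ∈ j ⁻¹' W := hWV ▸ hi
      exact this
    filter_upwards [hW.mem_nhds hzW] with q' hq' hqK
    obtain ⟨z', rfl⟩ := hjK q' hqK
    refine mem_image_of_mem _ (subset_closure ?_)
    rw [← hWV]; exact hq'

/-- no path between two antipodal points when the dimension is one -/
lemma not_TCcover_dim_one (hd : Module.finrank ℝ E = 1) (k : ℕ) :
    ¬ TCcover (Metric.sphere (0:E) 1) k := by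
  rintro ⟨U, hU, hcov, hs⟩
  haveI : Nontrivial E := Module.nontrivial_of_finrank_pos (R := ℝ) (by omega)
  obtain ⟨v, hv⟩ := exists_norm_eq E (show (0:ℝ) ≤ 1 by norm_num)
  have hv0 : v ≠ 0 := by rintro rfl; simp at hv
  let x : Metric.sphere (0:E) 1 := ⟨v, by simpa using hv⟩
  let y : Metric.sphere (0:E) 1 := ⟨-v, by simpa using hv⟩
  obtain ⟨i, hi⟩ := mem_iUnion.1 (hcov ▸ mem_univ (x, y) : (x, y) ∈ ⋃ i, U i)
  obtain ⟨s, -, hs⟩ := hs i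
  obtain ⟨h0, h1⟩ := hs _ hi
  let f : I → ℝ := fun t => inner ℝ v (s (x, y) t : E)
  have hf : Continuous f := by
    have : Continuous (s (x, y)) := (s (x,y)).continuous
    fun_prop
  have f0 : f 0 = 1 := by simp [f, h0, x, hv]
  have f1 : f 1 = -1 := by simp [f, h1, y, hv]
  obtain ⟨t, ht⟩ := mem_range_of_exists_le_of_exists_ge hf ⟨1, by rw [f1]; norm_num⟩ ⟨0, by rw [f0]; norm_num⟩ (c := 0)
  obtain ⟨c, hc⟩ := (finrank_eq_one_iff_of_nonzero' v hv0).1 hd (s (x, y) t : E)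
  have hn : ‖(s (x, y) t : E)‖ = 1 := by simp
  simp only [f, ← hc, inner_smul_right, real_inner_self_eq_norm_sq, hv] at ht
  rw [← hc, norm_smul, hv] at hn
  have : c = 0 := by linarith
  simp [this] at hn

end Top
end
end PaperTC


namespace PaperTC
section
open Set MeasureTheory Topology Filter
section Skew

abbrev CP (m : ℕ) := PiLp 2 (fun _ : Fin m => ℂ)

lemma lie_mul_apply {F : Type*} [NormedAddCommGroup F] [NormedSpace ℝ F]
    (a b : F ≃ₗᵢ[ℝ] F) (x : F) : (a * b) x = a (b x) := rfl
lemma lie_one_apply {F : Type*} [NormedAddCommGroup F] [NormedSpace ℝ F]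
    (x : F) : (1 : F ≃ₗᵢ[ℝ] F) x = x := rfl

lemma exists_skew {F : Type*} [NormedAddCommGroup F] [InnerProductSpace ℝ F] [FiniteDimensional ℝ F]
    (h : Even (Module.finrank ℝ F)) :
    ∃ J : F →ₗ[ℝ] F, (∀ x, inner ℝ (J x) x = 0) ∧ ∀ x, J x = 0 → x = 0 := by
  obtain ⟨m, hm⟩ := h
  have hP : Module.finrank ℝ (CP m) = m + m := by
    have : Module.finrank ℝ (CP m) = Module.finrank ℝ (Fin m → ℂ) :=
      (WithLp.linearEquiv 2 ℝ (Fin m → ℂ)).finrank_eq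
    rw [this, Module.finrank_pi_fintype]; simp; ring
  let e : F ≃ₗᵢ[ℝ] (CP m) := (stdOrthonormalBasis ℝ F).equiv (stdOrthonormalBasis ℝ (CP m))
    (finCongr (hm.trans hP.symm))
  let J0 : (CP m) →ₗ[ℝ] (CP m) :=
    { toFun := fun z => WithLp.toLp 2 (fun i => Complex.I * z i)
      map_add' := by intro a b; ext i; simp [mul_add]
      map_smul' := by intro a b; ext i; simp; ring }
  refine ⟨e.symm.toLinearEquiv.toLinearMap ∘ₗ J0 ∘ₗ e.toLinearEquiv.toLinearMap, ?_, ?_⟩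
  · intro x
    have : inner ℝ (e.symm (J0 (e x))) x = inner ℝ (J0 (e x)) (e x) := by
      rw [← e.inner_map_map, e.apply_symm_apply]
    refine this.trans ?_
    rw [PiLp.inner_apply]
    apply Finset.sum_eq_zero
    intro i _
    simp [J0, Complex.inner]
    ring
  · intro x hx
    have h1 : J0 (e x) = 0 := e.symm.map_eq_zero_iff.1 hx
    have : e x = 0 := by
      ext i
      have := congrArg (fun z : (CP m) => z i) h1
      simpa [J0] using this
    exact e.map_eq_zero_iff.1 this

variable {E : Type*} [NormedAddCommGroup E] [InnerProductSpace ℝ E] [FiniteDimensional ℝ E]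

lemma exists_skew_sub (W : Submodule ℝ E) (h : Even (Module.finrank ℝ W)) :
    ∃ J : E →ₗ[ℝ] E, (∀ x, J x ∈ W) ∧ (∀ x, inner ℝ (J x) x = 0) ∧ (∀ x, J x = 0 → x ∈ Wᗮ) ∧
      ∀ x ∈ Wᗮ, J x = 0 := by
  obtain ⟨J, h1, h2⟩ := exists_skew h
  refine ⟨W.subtype ∘ₗ J ∘ₗ W.orthogonalProjection.toLinearMap, ?_, ?_, ?_, ?_⟩
  · intro x; simp
  · intro x
    simp only [LinearMap.comp_apply, Submodule.subtype_apply]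
    rw [← Submodule.inner_orthogonalProjection_eq_of_mem_left]
    exact h1 _
  · intro x hx
    have := h2 _ (Subtype.ext hx)
    exact (Submodule.orthogonalProjection_eq_zero_iff).1 this
  · intro x hx
    have : W.orthogonalProjection x = 0 := (Submodule.orthogonalProjection_eq_zero_iff).2 hx
    simp [this]

lemma exists_J {p : ℕ} (hp : p.Prime) (ρ : Multiplicative (ZMod p) →* (E ≃ₗᵢ[ℝ] E))
    (V : Submodule ℝ E) (hV1 : ∀ g, ∀ v ∈ V, ρ g v = v) (hV2 : ∀ x, (∀ g, ρ g x = x) → x ∈ V)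
    (he : Even (Module.finrank ℝ V)) (he' : Even (Module.finrank ℝ Vᗮ)) :
    ∃ J : E →ₗ[ℝ] E, (∀ x, inner ℝ (J x) x = 0) ∧ (∀ x, J x = 0 → x = 0) ∧
      ∀ g x, J (ρ g x) = ρ g (J x) := by
  haveI : Fact p.Prime := ⟨hp⟩
  have hinv : ∀ g x y, inner ℝ (ρ g x) y = inner ℝ x (ρ g⁻¹ y) := by
    intro g x y
    have : y = ρ g (ρ g⁻¹ y) := by
      rw [← lie_mul_apply, ← map_mul]; simp
    conv_lhs => rw [this]
    exact (ρ g).inner_map_map _ _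
  have hsub : ∀ g x, ρ g x - x ∈ Vᗮ := by
    intro g x
    rw [Submodule.mem_orthogonal']
    intro v hv
    rw [inner_sub_left, hinv, hV1 _ v hv, sub_self]
  obtain ⟨J1, a1, a2, a3, a4⟩ := exists_skew_sub V he
  have c1 : ∀ g x, J1 (ρ g x) = ρ g (J1 x) := by
    intro g x
    rw [hV1 g _ (a1 x)]
    have := a4 _ (hsub g x)
    rwa [map_sub, sub_eq_zero] at this
  set g0 : Multiplicative (ZMod p) := Multiplicative.ofAdd 1
  have hgen : ∀ h : Multiplicative (ZMod p), h = g0 ^ (Multiplicative.toAdd h).val := by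
    intro h
    apply Multiplicative.toAdd.injective
    simp [g0]
  have hfix0 : ∀ x, ρ g0 x = x → x ∈ V := by
    intro x hx
    apply hV2
    intro h
    rw [hgen h, map_pow]
    generalize (Multiplicative.toAdd h).val = m
    induction m with
    | zero => simp
    | succ m ih => rw [pow_succ, lie_mul_apply, hx, ih]
  have main : ∃ J2 : E →ₗ[ℝ] E, (∀ x, J2 x ∈ Vᗮ) ∧ (∀ x, inner ℝ (J2 x) x = 0) ∧
      (∀ x, J2 x = 0 → x ∈ V) ∧ ∀ g x, J2 (ρ g x) = ρ g (J2 x) := by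
    rcases hp.eq_two_or_odd with h2 | hodd
    · obtain ⟨J2, b1, b2, b3, b4⟩ := exists_skew_sub Vᗮ he'
      refine ⟨J2, b1, b2, fun x hx => by simpa using b3 x hx, ?_⟩
      have hg2 : g0 * g0 = 1 := by
        apply Multiplicative.toAdd.injective
        have : (1 : ZMod p) + 1 = ((2 : ℕ) : ZMod p) := by norm_num
        simp only [g0, toAdd_mul, toAdd_ofAdd, toAdd_one]
        rw [this]
        subst h2
        exact CharP.cast_eq_zero _ _
      have hplus : ∀ x, ρ g0 x + x ∈ V := by
        intro x
        apply hfix0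
        rw [map_add, ← lie_mul_apply, ← map_mul, hg2, map_one,
          lie_one_apply, add_comm]
      have com : ∀ x, J2 (ρ g0 x) = ρ g0 (J2 x) := by
        intro x
        have e1 : J2 (ρ g0 x + x) = 0 := b4 _ (by simpa using hplus x)
        have e2 : ρ g0 (J2 x) + J2 x = 0 := by
          have m1 := hplus (J2 x)
          have m2 : ρ g0 (J2 x) + J2 x ∈ Vᗮ := by
            have := Submodule.add_mem _ (hsub g0 (J2 x)) (Submodule.smul_mem _ (2:ℝ) (b1 x))
            convert this using 1
            module
          exact (Submodule.disjoint_def.1 V.orthogonal_disjoint) _ m1 m2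
        rw [map_add] at e1
        rw [eq_neg_of_add_eq_zero_left e1, eq_neg_of_add_eq_zero_left e2]
      intro h
      rw [hgen h, map_pow]
      generalize (Multiplicative.toAdd h).val = m
      induction m with
      | zero => simp
      | succ m ih => intro x; rw [pow_succ, lie_mul_apply,
          lie_mul_apply, ih, com]
    · refine ⟨(ρ g0).toLinearEquiv.toLinearMap - (ρ g0⁻¹).toLinearEquiv.toLinearMap, ?_, ?_, ?_, ?_⟩
      · intro x
        have := Submodule.sub_mem _ (hsub g0 x) (hsub g0⁻¹ x)
        simpa using this
      · intro x
        have : inner ℝ (ρ g0 x) x = inner ℝ (ρ g0⁻¹ x) x := by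
          rw [hinv, real_inner_comm]
        rw [LinearMap.sub_apply, inner_sub_left]
        exact sub_eq_zero.2 this
      · intro x hx
        have hx' : ρ g0 x = ρ g0⁻¹ x := by
          have : ρ g0 x - ρ g0⁻¹ x = 0 := by simpa using hx
          exact sub_eq_zero.1 this
        have h2 : ρ (g0 ^ 2) x = x := by
          rw [pow_two, map_mul, lie_mul_apply, hx', ← lie_mul_apply,
            ← map_mul]; simp
        apply hfix0
        have hg : g0 = (g0 ^ 2) ^ ((p + 1) / 2) := by
          rw [← pow_mul, Nat.mul_div_cancel' (by omega)]
          apply Multiplicative.toAdd.injective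
          simp [g0]
        rw [hg, map_pow]
        generalize (p + 1) / 2 = m
        induction m with
        | zero => simp
        | succ m ih => rw [pow_succ, lie_mul_apply, h2, ih]
      · intro g x
        have k : ∀ a b : Multiplicative (ZMod p), ρ a (ρ b x) = ρ b (ρ a x) := by
          intro a b
          rw [← lie_mul_apply, ← lie_mul_apply, ← map_mul,
            ← map_mul, mul_comm]
        have : ρ g0 (ρ g x) - ρ g0⁻¹ (ρ g x) = ρ g (ρ g0 x - ρ g0⁻¹ x) := by
          rw [map_sub, k, k g0⁻¹]
        simpa using this
  obtain ⟨J2, b1, b2, b3, b4⟩ := main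
  refine ⟨J1 + J2, ?_, ?_, ?_⟩
  · intro x; rw [LinearMap.add_apply, inner_add_left, a2, b2, add_zero]
  · intro x hx
    have e : J1 x = - J2 x := eq_neg_of_add_eq_zero_left hx
    have z1 : J1 x = 0 := (Submodule.disjoint_def.1 V.orthogonal_disjoint) _ (a1 x)
      (e ▸ Submodule.neg_mem _ (b1 x))
    have z2 : J2 x = 0 := by rw [z1] at e; simpa using e.symm
    exact (Submodule.disjoint_def.1 V.orthogonal_disjoint) _ (b3 x z2) (a3 x z1)
  · intro g x
    simp [c1, b4]
end Skew
end
end PaperTC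


namespace PaperTC
section
open Set MeasureTheory Topology Filter
section Fin

lemma eqTCcover.toTC {G X : Type*} [TopologicalSpace X] {act : G → X → X} {k : ℕ}
    (h : eqTCcover act k) : TCcover X k := by
  obtain ⟨U, hU, hc, hs⟩ := h
  refine ⟨U, hU, hc, fun i => ?_⟩
  obtain ⟨-, s, h1, h2, -⟩ := hs i
  exact ⟨s, h1, h2⟩

lemma eqTCcover.toFixed {G X Z : Type*} [TopologicalSpace X] [TopologicalSpace Z]
    {act : G → X → X} {k : ℕ} (h : eqTCcover act k) {j : Z → X} (hj : IsEmbedding j)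
    (hr : range j = fixedSet act) : TCcover Z k := by
  classical
  obtain ⟨U, hU, hc, hs⟩ := h
  have hjj : Continuous fun q : Z × Z => (j q.1, j q.2) :=
    (hj.continuous.comp continuous_fst).prodMk (hj.continuous.comp continuous_snd)
  have hfix : ∀ z g, act g (j z) = j z := fun z g => by
    have : j z ∈ fixedSet act := hr ▸ mem_range_self z
    exact this g
  refine ⟨fun i => (fun q : Z × Z => (j q.1, j q.2)) ⁻¹' U i, fun i => (hU i).preimage hjj, ?_,
    fun i => ?_⟩
  · rw [← preimage_iUnion, hc, preimage_univ]
  obtain ⟨-, s, h1, h2, h3⟩ := hs i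
  have hex : ∀ q : Z × Z, (j q.1, j q.2) ∈ U i → ∃ γ : C(I, Z), ∀ t, j (γ t) = s (j q.1, j q.2) t := by
    intro q hq
    have hm : ∀ t, ∃ z, j z = s (j q.1, j q.2) t := by
      intro t
      have : s (j q.1, j q.2) t ∈ fixedSet act := by
        intro g
        rw [← h3 g _ hq t, hfix, hfix]
      rw [← hr] at this
      exact this
    choose γ hγ using hm
    refine ⟨⟨γ, ?_⟩, hγ⟩
    rw [hj.isInducing.continuous_iff]
    have : j ∘ γ = s (j q.1, j q.2) := by ext t; exact hγ t
    rw [this]; exact (s _).continuous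
  refine ⟨fun q => if h : (j q.1, j q.2) ∈ U i then (hex q h).choose else ContinuousMap.const I q.1, ?_, ?_⟩
  · have hind : IsInducing (fun γ : C(I, Z) => (⟨j, hj.continuous⟩ : C(Z, X)).comp γ) :=
      ContinuousMap.isInducing_postcomp (⟨j, hj.continuous⟩ : C(Z, X)) hj.isInducing
    rw [hind.continuousOn_iff]
    refine (h1.comp hjj.continuousOn (fun q hq => hq)).congr ?_
    intro q hq
    ext t
    have hq' : (j q.1, j q.2) ∈ U i := hq
    simp only [Function.comp, dif_pos hq']
    exact (hex q hq').choose_spec t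
  · intro q hq
    have hq' : (j q.1, j q.2) ∈ U i := hq
    simp only [dif_pos hq']
    constructor
    · apply hj.injective
      rw [(hex q hq').choose_spec, (h2 _ hq').1]
    · apply hj.injective
      rw [(hex q hq').choose_spec, (h2 _ hq').2]

lemma minCover_eq_two {P : ℕ → Prop} : minCover P = 2 ↔ (P 2 ∧ ¬ P 1) := by
  unfold minCover
  constructor
  · intro h
    have hne : {k : ℕ∞ | ∃ m : ℕ, k = m ∧ 1 ≤ m ∧ P m}.Nonempty := by
      by_contra hn
      rw [not_nonempty_iff_eq_empty] at hn
      rw [hn, sInf_empty] at h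
      exact absurd h (by decide)
    have hm := csInf_mem hne
    rw [h] at hm
    obtain ⟨m, h1, h2, h3⟩ := hm
    have : m = 2 := by exact_mod_cast h1.symm
    subst this
    refine ⟨h3, fun h1 => ?_⟩
    have : sInf {k : ℕ∞ | ∃ m : ℕ, k = m ∧ 1 ≤ m ∧ P m} ≤ 1 := sInf_le ⟨1, by simp, le_rfl, h1⟩
    rw [h] at this
    exact absurd this (by decide)
  · rintro ⟨h2, h1⟩
    apply le_antisymm
    · exact sInf_le ⟨2, by simp, by norm_num, h2⟩
    · apply le_sInf
      rintro _ ⟨m, rfl, hm, hP⟩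
      have : m ≠ 1 := by rintro rfl; exact h1 hP
      have : 2 ≤ m := by omega
      exact_mod_cast this

lemma planner_of_formula {n : ℕ} {G : Type*} [Monoid G]
    (ρ : G →* (EuclideanSpace ℝ (Fin (n + 1)) ≃ₗᵢ[ℝ] EuclideanSpace ℝ (Fin (n + 1))))
    (N : ℝ × EuclideanSpace ℝ (Fin (n + 1)) × EuclideanSpace ℝ (Fin (n + 1)) →
      EuclideanSpace ℝ (Fin (n + 1))) (hN : Continuous N) (U : Set (Sph n × Sph n))
    (hN0 : ∀ q ∈ U, ∀ t : I, N (t, q.1, q.2) ≠ 0)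
    (hNs : ∀ q ∈ U, N (0, q.1, q.2) = q.1) (hNe : ∀ q ∈ U, N (1, q.1, q.2) = q.2)
    (hNg : ∀ g t x y, N (t, ρ g x, ρ g y) = ρ g (N (t, x, y)))
    (hUg : ∀ g p, p ∈ U → (sphereAct ρ g p.1, sphereAct ρ g p.2) ∈ U) :
      ∃ s : Sph n × Sph n → C(I, Sph n),
        ContinuousOn s U ∧
        (∀ p ∈ U, s p 0 = p.1 ∧ s p 1 = p.2) ∧
        (∀ g p, p ∈ U → ∀ t : I, s (sphereAct ρ g p.1, sphereAct ρ g p.2) t = sphereAct ρ g (s p t)) := by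
  classical
  have hc : Continuous fun z : U × I => N (z.2, (z.1.1.1 : EuclideanSpace ℝ (Fin (n + 1))), z.1.1.2) := by
    fun_prop
  let F : C(U × I, Sph n) := ⟨fun z => ⟨nrm (N (z.2, (z.1.1.1 : EuclideanSpace ℝ (Fin (n + 1))), z.1.1.2)),
    mem_sphere_zero_iff_norm.2 (norm_nrm (hN0 _ z.1.2 _))⟩, by
      refine Continuous.subtype_mk ?_ _
      unfold nrm
      exact (hc.norm.inv₀ (fun z => norm_ne_zero_iff.2 (hN0 _ z.1.2 _))).smul hc⟩
  refine ⟨fun p => if h : p ∈ U then F.curry ⟨p, h⟩ else ContinuousMap.const I p.1, ?_, ?_, ?_⟩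
  · rw [continuousOn_iff_continuous_restrict]
    convert F.curry.continuous using 1
    ext z
    have := z.2
    simp [Set.domRestrict, this]
  · intro p hp
    simp only [dif_pos hp]
    constructor
    · apply Subtype.ext
      simp only [ContinuousMap.curry_apply, F, ContinuousMap.coe_mk, Set.Icc.coe_zero]
      rw [hNs p hp, nrm_of_unit (by simp)]
    · apply Subtype.ext
      simp only [ContinuousMap.curry_apply, F, ContinuousMap.coe_mk, Set.Icc.coe_one]
      rw [hNe p hp, nrm_of_unit (by simp)]
  · intro g p hp t
    simp only [dif_pos hp, dif_pos (hUg g p hp)]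
    apply Subtype.ext
    simp only [ContinuousMap.curry_apply, F, ContinuousMap.coe_mk, sphereAct]
    rw [hNg]
    simp [nrm]

lemma eqTCcover_two {n : ℕ} {G : Type*} [Group G]
    (ρ : G →* (EuclideanSpace ℝ (Fin (n + 1)) ≃ₗᵢ[ℝ] EuclideanSpace ℝ (Fin (n + 1))))
    (J : EuclideanSpace ℝ (Fin (n + 1)) →ₗ[ℝ] EuclideanSpace ℝ (Fin (n + 1)))
    (hJ : ∀ x, inner ℝ (J x) x = 0) (hJ0 : ∀ x, J x = 0 → x = 0)
    (hJg : ∀ g x, J (ρ g x) = ρ g (J x)) : eqTCcover (sphereAct ρ) 2 := by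
  have hnorm : ∀ x : Sph n, ‖(x : EuclideanSpace ℝ (Fin (n + 1)))‖ = 1 := fun x => by simp
  have hx0 : ∀ x : Sph n, (x : EuclideanSpace ℝ (Fin (n + 1))) ≠ 0 := fun x h => by
    have := hnorm x; rw [h] at this; simp at this
  have hJc : Continuous J := J.continuous_of_finiteDimensional
  have seg : ∀ x y : Sph n, ∀ b : ℝ, 0 ≤ b → b ≤ 1 →
      (1 - b) • (x : EuclideanSpace ℝ (Fin (n + 1))) = b • (y : EuclideanSpace ℝ (Fin (n + 1))) → x = y := by
    intro x y b h0 h1 h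
    have h2 := congrArg norm h
    rw [norm_smul, norm_smul, hnorm, hnorm, Real.norm_of_nonneg h0,
      Real.norm_of_nonneg (by linarith)] at h2
    have hb : b = 1/2 := by linarith
    rw [hb] at h
    norm_num at h
    exact Subtype.ext h
  let U : Fin 2 → Set (Sph n × Sph n) :=
    ![{q | (q.1 : EuclideanSpace ℝ (Fin (n + 1))) ≠ -q.2}, {q | q.1 ≠ q.2}]
  have hU0 : U 0 = {q | (q.1 : EuclideanSpace ℝ (Fin (n + 1))) ≠ -q.2} := rfl
  have hU1 : U 1 = {q | q.1 ≠ q.2} := rfl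
  refine ⟨U, ?_, ?_, ?_⟩
  · rw [Fin.forall_fin_two]
    constructor
    · exact isOpen_ne_fun (by fun_prop) (by fun_prop)
    · exact isOpen_ne_fun (by fun_prop) (by fun_prop)
  · rw [eq_univ_iff_forall]
    intro q
    rw [mem_iUnion, Fin.exists_fin_two]
    by_contra! h
    rw [hU0, hU1] at h
    simp only [mem_setOf_eq, ne_eq, not_not] at h
    obtain ⟨h1, h2⟩ := h
    rw [h2] at h1
    have : (2:ℝ) • (q.2 : EuclideanSpace ℝ (Fin (n + 1))) = 0 := by
      rw [two_smul]; nth_rewrite 1 [h1]; simp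
    exact hx0 q.2 ((smul_eq_zero.1 this).resolve_left two_ne_zero)
  · rw [Fin.forall_fin_two]
    constructor
    · have hUg : ∀ g p, p ∈ U 0 → (sphereAct ρ g p.1, sphereAct ρ g p.2) ∈ U 0 := by
        intro g p hp h
        apply hp
        simp only [sphereAct] at h
        rw [← map_neg] at h
        exact (ρ g).injective h
      refine ⟨hUg, planner_of_formula ρ (fun z => (1 - z.1) • z.2.1 + z.1 • z.2.2) (by fun_prop) _
        ?_ ?_ ?_ ?_ hUg⟩
      · intro q hq t h
        simp only at h
        have h' := eq_neg_of_add_eq_zero_left h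
        rw [← smul_neg] at h'
        have := seg q.1 ⟨-q.2, by simp⟩ t t.2.1 t.2.2 h'
        exact hq (congrArg Subtype.val this)
      · intro q hq; simp
      · intro q hq; simp
      · intro g t x y; simp
    · have hUg : ∀ g p, p ∈ U 1 → (sphereAct ρ g p.1, sphereAct ρ g p.2) ∈ U 1 := by
        intro g p hp h
        apply hp
        have := congrArg Subtype.val h
        simp only [sphereAct] at this
        exact Subtype.ext ((ρ g).injective this)
      refine ⟨hUg, planner_of_formula ρ (fun z => ((1 - 2 * min (2 * z.1) 1) * (1 - max (2 * z.1 - 1) 0)) • z.2.1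
        + (min (2 * z.1) 1 * (1 - min (2 * z.1) 1)) • J z.2.1 + max (2 * z.1 - 1) 0 • z.2.2)
        (by fun_prop) _ ?_ ?_ ?_ ?_ hUg⟩
      · intro q hq t h
        simp only at h
        rcases lt_or_ge (2 * (t:ℝ)) 1 with ht | ht
        · rw [min_eq_left ht.le, max_eq_right (by linarith)] at h
          simp only [sub_zero, mul_one, zero_smul, add_zero] at h
          have h2 := congrArg (fun z => inner ℝ z (q.1 : EuclideanSpace ℝ (Fin (n + 1)))) h
          simp only [inner_add_left, inner_smul_left, hJ, inner_zero_left, real_inner_self_eq_norm_sq, hnorm] at h2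
          have h3 : 1 - 2 * (2 * (t:ℝ)) = 0 := by simpa using h2
          rw [h3, zero_smul, zero_add] at h
          have h4 : (2 * (t:ℝ)) = 1/2 := by linarith
          rw [h4, smul_eq_zero] at h
          rcases h with h | h
          · norm_num at h
          · exact hx0 _ (hJ0 _ h)
        · rw [min_eq_right ht, max_eq_left (by linarith)] at h
          have ht1 := t.2.2
          have h' : (1 - (2 * (t:ℝ) - 1)) • (q.1 : EuclideanSpace ℝ (Fin (n + 1))) = (2 * (t:ℝ) - 1) • (q.2 : EuclideanSpace ℝ (Fin (n + 1))) := by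
            have : (2 * (t:ℝ) - 1) • (q.2 : EuclideanSpace ℝ (Fin (n + 1))) - (1 - (2 * (t:ℝ) - 1)) • (q.1 : EuclideanSpace ℝ (Fin (n + 1))) = 0 := by
              rw [← h]; module
            exact (sub_eq_zero.1 this).symm
          exact hq (seg _ _ _ (by linarith) (by linarith) h')
      · intro q hq; simp
      · intro q hq; norm_num
      · intro g t x y; simp [hJg]

theorem main_thm (p : ℕ) (hp : p.Prime) (n k : ℕ) (hkn : k ≤ n)
    (ρ : Multiplicative (ZMod p) →*
      (EuclideanSpace ℝ (Fin (n + 1)) ≃ₗᵢ[ℝ] EuclideanSpace ℝ (Fin (n + 1))))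
    (V : Submodule ℝ (EuclideanSpace ℝ (Fin (n + 1))))
    (hV : Module.finrank ℝ V = k + 1)
    (hVfix : ∀ g : Multiplicative (ZMod p), ∀ v ∈ V, ρ g v = v)
    (hfixV : ∀ x : ↥(Sph n),
      (∀ g : Multiplicative (ZMod p), sphereAct ρ g x = x) ↔
        (x : EuclideanSpace ℝ (Fin (n + 1))) ∈ V) :
    eqTC (sphereAct ρ) = 2 ↔ (Odd n ∧ Odd k) := by
  have hE : Module.finrank ℝ (EuclideanSpace ℝ (Fin (n + 1))) = n + 1 := by simp
  unfold eqTC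
  rw [minCover_eq_two]
  constructor
  · rintro ⟨h2, -⟩
    constructor
    · by_contra hn
      rw [Nat.not_odd_iff_even] at hn
      rcases Nat.eq_zero_or_pos n with h0 | h0
      · exact not_TCcover_dim_one (by rw [hE, h0]) 2 h2.toTC
      · exact not_TCcover_two (by rw [hE]; omega) (by rw [hE]; exact hn.add_one) h2.toTC
    · by_contra hn
      rw [Nat.not_odd_iff_even] at hn
      let j : Metric.sphere (0 : V) 1 → Sph n := fun v => ⟨(v.1 : EuclideanSpace ℝ (Fin (n + 1))),
        mem_sphere_zero_iff_norm.2 (mem_sphere_zero_iff_norm.1 v.2)⟩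
      have hj : IsEmbedding j := by
        have h1 : IsEmbedding (fun v : Metric.sphere (0 : V) 1 => ((v.1 : V) : EuclideanSpace ℝ (Fin (n + 1)))) :=
          IsEmbedding.subtypeVal.comp IsEmbedding.subtypeVal
        exact IsEmbedding.of_comp (Continuous.subtype_mk h1.continuous _) continuous_subtype_val h1
      have hr : range j = fixedSet (sphereAct ρ) := by
        ext x
        constructor
        · rintro ⟨v, rfl⟩
          exact (hfixV _).2 v.1.2
        · intro hx
          have hxV := (hfixV x).1 hx
          exact ⟨⟨⟨x, hxV⟩, by simp⟩, rfl⟩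
      have hT := h2.toFixed hj hr
      rcases Nat.eq_zero_or_pos k with h0 | h0
      · exact not_TCcover_dim_one (by rw [hV, h0]) 2 hT
      · exact not_TCcover_two (by rw [hV]; omega) (by rw [hV]; exact hn.add_one) hT
  · rintro ⟨hn, hk⟩
    refine ⟨?_, fun h1 => not_TCcover_one (by rw [hE]; have := hn.pos; omega) h1.toTC⟩
    have hfx : ∀ x, (∀ g, ρ g x = x) → x ∈ V := by
      intro x hx
      by_cases h0 : x = 0
      · rw [h0]; exact V.zero_mem
      · have := (hfixV ⟨nrm x, mem_sphere_zero_iff_norm.2 (norm_nrm h0)⟩).1 (fun g => by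
          apply Subtype.ext
          simp [sphereAct, nrm, hx g])
        have h2 := V.smul_mem ‖x‖ this
        simpa [nrm, smul_smul, norm_ne_zero_iff.2 h0] using h2
    have hev : Even (Module.finrank ℝ Vᗮ) := by
      have := V.finrank_add_finrank_orthogonal
      rw [hV, hE] at this
      have h3 : Even (n - k) := Nat.Odd.sub_odd hn hk
      have h4 : Module.finrank ℝ Vᗮ = n - k := by omega
      rwa [h4]
    obtain ⟨J, a, b, c⟩ := exists_J hp ρ V hVfix hfx (by rw [hV]; exact hk.add_one) hev
    exact eqTCcover_two ρ J a b c
end Fin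
end
end PaperTC

open PaperTC

/-- Let `ℤ/p` (`p` prime) act linearly on `S^n` with non-empty fixed point
set, the great `k`-sphere cut out by a pointwise-fixed subspace `V` of dimension `k + 1`,
`0 ≤ k ≤ n`.  Then `TC_{ℤ/p}(S^n) = 2` if and only if both `n` and `k` are odd. -/
theorem eqTC_linear_zmod_sphere_eq_two_iff (p : ℕ) (hp : p.Prime) (n k : ℕ) (hkn : k ≤ n)
    (ρ : Multiplicative (ZMod p) →*
      (EuclideanSpace ℝ (Fin (n + 1)) ≃ₗᵢ[ℝ] EuclideanSpace ℝ (Fin (n + 1))))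
    (hfix : (fixedSet (sphereAct ρ)).Nonempty)
    (V : Submodule ℝ (EuclideanSpace ℝ (Fin (n + 1))))
    (hV : Module.finrank ℝ V = k + 1)
    (hVfix : ∀ g : Multiplicative (ZMod p), ∀ v ∈ V, ρ g v = v)
    (hfixV : ∀ x : ↥(Sph n),
      (∀ g : Multiplicative (ZMod p), sphereAct ρ g x = x) ↔
        (x : EuclideanSpace ℝ (Fin (n + 1))) ∈ V) :
    eqTC (sphereAct ρ) = 2 ↔ (Odd n ∧ Odd k) := by
  exact main_thm p hp n k hkn ρ V hV hVfix hfixV
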